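/- Suppose g(r) = o(e^{-c r}) as r → ∞ for some c > 0. Then almost surely, lim_{n→∞} (α n d_n^d)/(log n) = 1. -/

import Mathlib

open MeasureTheory ProbabilityTheory Filter Set

noncomputable section

namespace RCM

/-- The toroidal metric on the unit cube. -/
def torusDist {d : ℕ} (x y : EuclideanSpace ℝ (Fin d)) : ℝ :=
  ⨅ z : Fin d → ℤ, ‖x - y - (WithLp.equiv 2 (Fin d → ℝ)).symm (fun i => (z i : ℝ))‖

/-- The half-open unit cube `S = (-1/2, 1/2]^d`. -/
def cube (d : ℕ) : Set (EuclideanSpace ℝ (Fin d)) :=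
  {x | ∀ i, x i ∈ Set.Ioc (-(1/2) : ℝ) (1/2)}

/-- The random connection model: i.i.d. uniform points `X`, coupled Poisson counts `N`,
i.i.d. uniform edge variables `U`, with the three families mutually independent, and a
non-increasing connection function `g : [0,∞) → [0,1]` with finite positive integral `α`. -/
structure Model (d : ℕ) {Ω : Type*} [MeasurableSpace Ω] (P : Measure Ω) where
  g : ℝ → ℝ
  α : ℝ
  X : ℕ → Ω → EuclideanSpace ℝ (Fin d)
  N : ℕ → Ω → ℕ
  U : ℕ → ℕ → Ω → ℝ
  g_antitone : AntitoneOn g (Set.Ici 0)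
  g_mem : ∀ r : ℝ, 0 ≤ r → g r ∈ Set.Icc (0 : ℝ) 1
  g_integrable : MeasureTheory.Integrable (fun x : EuclideanSpace ℝ (Fin d) => g ‖x‖)
  α_def : α = ∫ x : EuclideanSpace ℝ (Fin d), g ‖x‖
  α_pos : 0 < α
  X_meas : ∀ i, Measurable (X i)
  X_unif : ∀ i : ℕ, 1 ≤ i → Measure.map (X i) P = volume.restrict (cube d)
  X_indep : iIndepFun
    (fun i : {i : ℕ // 1 ≤ i} => X i) P
  N_meas : ∀ n, Measurable (N n)
  N_mono : ∀ ω, Monotone fun n => N n ω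
  N_poisson : ∀ n k : ℕ,
    P {ω | N n ω = k} = ENNReal.ofReal (Real.exp (-(n : ℝ)) * (n : ℝ) ^ k / k.factorial)
  U_meas : ∀ i j, Measurable (U i j)
  U_unif : ∀ i j : ℕ, 1 ≤ i → i < j →
    Measure.map (U i j) P = volume.restrict (Set.Icc (0 : ℝ) 1)
  U_indep : iIndepFun
    (fun p : {p : ℕ × ℕ // 1 ≤ p.1 ∧ p.1 < p.2} => U p.1.1 p.1.2) P
  families_indep : iIndep
    (![MeasurableSpace.comap (fun ω => fun i : ℕ => X i ω) inferInstance,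
       MeasurableSpace.comap (fun ω => fun n : ℕ => N n ω) inferInstance,
       MeasurableSpace.comap (fun ω => fun p : ℕ × ℕ => U p.1 p.2 ω) inferInstance]) P

variable {d : ℕ} {Ω : Type*} [MeasurableSpace Ω] {P : Measure Ω}

/-- Adjacency in the graph `G_n(r)`: vertices `1 ≤ i,j ≤ N_n` are joined iff
`U_{ij} ≤ g(dist(X_i,X_j)/r)`. -/
def adj (M : Model d P) (n : ℕ) (r : ℝ) (ω : Ω) (i j : ℕ) : Prop :=
  i ≠ j ∧ 1 ≤ i ∧ 1 ≤ j ∧ i ≤ M.N n ω ∧ j ≤ M.N n ω ∧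
    M.U (min i j) (max i j) ω ≤ M.g (torusDist (M.X i ω) (M.X j ω) / r)

/-- The degree of vertex `i` in `G_n(r)`. -/
def deg (M : Model d P) (n : ℕ) (r : ℝ) (ω : Ω) (i : ℕ) : ℕ :=
  {j : ℕ | adj M n r ω i j}.ncard

/-- `W_n(r)`, the number of isolated vertices of `G_n(r)`. -/
def isolatedCount (M : Model d P) (n : ℕ) (r : ℝ) (ω : Ω) : ℕ :=
  {i : ℕ | 1 ≤ i ∧ i ≤ M.N n ω ∧ deg M n r ω i = 0}.ncard


/-- `r̂_n(γ)` defined by `r̂_n(γ)^d = γ log n / (α n)`. -/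
def rhat (M : Model d P) (γ : ℝ) (n : ℕ) : ℝ :=
  (γ * Real.log n / (M.α * n)) ^ ((1 : ℝ) / d)

/-- `d_n`, the critical parameter for absence of isolated nodes. -/
def critRadius (M : Model d P) (n : ℕ) (ω : Ω) : ℝ :=
  sInf {r : ℝ | 0 < r ∧ isolatedCount M n r ω = 0}

/-- The maximum vertex degree `Δ_n` of `G_n(r)`. -/
def maxDeg (M : Model d P) (n : ℕ) (r : ℝ) (ω : Ω) : ℕ :=
  (Finset.Icc 1 (M.N n ω)).sup (deg M n r ω)

/-- The minimum vertex degree `δ_n` of `G_n(r)`. -/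
def minDeg (M : Model d P) (n : ℕ) (r : ℝ) (ω : Ω) : ℕ :=
  sInf {k : ℕ | ∃ i, 1 ≤ i ∧ i ≤ M.N n ω ∧ deg M n r ω i = k}

/-- The length (toroidal metric) of the longest edge of `G_n(r)` (`0` if there are no edges). -/
def longestEdge (M : Model d P) (n : ℕ) (r : ℝ) (ω : Ω) : ℝ :=
  sSup ({0} ∪ {t : ℝ | ∃ i j, adj M n r ω i j ∧ t = torusDist (M.X i ω) (M.X j ω)})

/-- Connectivity of `G_n(r)`: any two vertices are joined by a path. -/
def connectedGraph (M : Model d P) (n : ℕ) (r : ℝ) (ω : Ω) : Prop :=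
  ∀ i j : ℕ, 1 ≤ i → i ≤ M.N n ω → 1 ≤ j → j ≤ M.N n ω →
    Relation.ReflTransGen (adj M n r ω) i j

/-- `H(x) = 1 - x + x log x` (with `H(0) = 1`, since `log 0 = 0` in Lean). -/
def H (x : ℝ) : ℝ := 1 - x + x * Real.log x

/-- The inverse of the restriction of `H` to `[1, ∞)`. -/
def Hplusinv (y : ℝ) : ℝ := sInf {x : ℝ | 1 ≤ x ∧ y ≤ H x}

/-- The inverse of the restriction of `H` to `[0, 1]`. -/
def Hminusinv (y : ℝ) : ℝ := sInf {x : ℝ | 0 ≤ x ∧ H x ≤ y}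

/-- The standard normal distribution function. -/
def stdNormalCDF (x : ℝ) : ℝ :=
  ∫ t in Set.Iic x, Real.exp (-t ^ 2 / 2) / Real.sqrt (2 * Real.pi)

/-!
On a block `ρ ^ k ≤ n < ρ ^ (k + 1)` the count `N_n` stays between deterministic bounds, and the
event that a vertex is isolated is monotone both in the number of vertices and in the radius. Hence
one vertex count and one radius per block suffice for each bound on `d_n`, with an error factor that
tends to `1` as `ρ → 1`, and the failure probabilities only have to be summable in `k`.

Above the critical scale the expected number of isolated vertices is summable along the blocks.
Below it the second moment method applies. A vertex that is joined to both `x` and `x'` is at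
distance at least `dist x x' / 2` from one of them, so the correlation of the two isolation events
is controlled by `φ (dist x x' / 2)` for the rescaled connection function `φ`. Markov's inequality
`φ t * |B(0, t)| ≤ ∫ φ` bounds it for distant pairs whatever the decay of `g`, and close pairs
contribute at most the volume of a ball.
-/

section Torus

/-- The inclusion of `ℤ^d` in Euclidean space. -/
def latticeVec (d : ℕ) : (Fin d → ℤ) →+ EuclideanSpace ℝ (Fin d) where
  toFun z := WithLp.toLp 2 fun i => (z i : ℝ)
  map_zero' := by ext; simp
  map_add' _ _ := by ext; simp

/-- The lattice `ℤ^d` in Euclidean space, whose quotient is the torus. -/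
def lattice (d : ℕ) : AddSubgroup (EuclideanSpace ℝ (Fin d)) :=
  (latticeVec d).range

lemma latticeVec_apply (z : Fin d → ℤ) (i : Fin d) : latticeVec d z i = z i := rfl

instance countable_lattice : Countable (lattice d) :=
  Set.countable_range (latticeVec d)

lemma torusDist_eq_norm_mk (x y : EuclideanSpace ℝ (Fin d)) :
    torusDist x y =
      ‖((x - y : EuclideanSpace ℝ (Fin d)) : EuclideanSpace ℝ (Fin d) ⧸ lattice d)‖ := by
  rw [QuotientAddGroup.norm_mk, Metric.infDist_eq_iInf]
  simp only [dist_eq_norm]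
  exact (iInf_range' (fun v => ‖x - y - v‖) (latticeVec d)).symm

lemma torusDist_nonneg (x y : EuclideanSpace ℝ (Fin d)) : 0 ≤ torusDist x y := by
  rw [torusDist_eq_norm_mk]
  exact norm_nonneg _

lemma torusDist_comm (x y : EuclideanSpace ℝ (Fin d)) : torusDist x y = torusDist y x := by
  simp only [torusDist_eq_norm_mk, QuotientAddGroup.mk_sub, norm_sub_rev]

lemma torusDist_triangle (x y z : EuclideanSpace ℝ (Fin d)) :
    torusDist x z ≤ torusDist x y + torusDist y z := by
  simp only [torusDist_eq_norm_mk, QuotientAddGroup.mk_sub]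
  exact norm_sub_le_norm_sub_add_norm_sub _ _ _

lemma torusDist_vadd_right (x y : EuclideanSpace ℝ (Fin d)) (v : lattice d) :
    torusDist x (v +ᵥ y) = torusDist x y := by
  simp only [torusDist_eq_norm_mk, QuotientAddGroup.mk_sub]
  congr 2
  rw [AddSubgroup.vadd_def, vadd_eq_add, add_comm]
  exact QuotientAddGroup.mk_add_of_mem y v.2

lemma norm_le_norm_sub_latticeVec {y : EuclideanSpace ℝ (Fin d)} (hy : y ∈ cube d)
    (z : Fin d → ℤ) : ‖y‖ ≤ ‖y - latticeVec d z‖ := by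
  rw [EuclideanSpace.norm_eq, EuclideanSpace.norm_eq]
  refine Real.sqrt_le_sqrt (Finset.sum_le_sum fun i _ => ?_)
  obtain ⟨hlt, hle⟩ := hy i
  simp only [Real.norm_eq_abs, sq_abs, PiLp.sub_apply, latticeVec_apply]
  rcases lt_trichotomy (z i) 0 with h | h | h
  · have : (z i : ℝ) ≤ -1 := by exact_mod_cast Int.le_sub_one_of_lt h
    nlinarith
  · simp [h]
  · have : (1 : ℝ) ≤ z i := by exact_mod_cast h
    nlinarith

lemma torusDist_add_left_of_mem_cube (x : EuclideanSpace ℝ (Fin d))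
    {y : EuclideanSpace ℝ (Fin d)} (hy : y ∈ cube d) : torusDist (x + y) x = ‖y‖ := by
  rw [torusDist_eq_norm_mk, add_sub_cancel_left]
  refine le_antisymm QuotientAddGroup.norm_mk_le_norm ?_
  rw [QuotientAddGroup.norm_mk]
  refine (Metric.le_infDist ⟨0, zero_mem _⟩).2 ?_
  rintro _ ⟨z, rfl⟩
  simpa only [dist_eq_norm] using norm_le_norm_sub_latticeVec hy z

lemma measurable_torusDist {β : Type*} [MeasurableSpace β]
    {f g : β → EuclideanSpace ℝ (Fin d)} (hf : Measurable f) (hg : Measurable g) :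
    Measurable fun b => torusDist (f b) (g b) := by
  simp only [torusDist]
  exact Measurable.iInf fun z => by fun_prop

/-- The half-open unit cube with lower corner `a`. -/
def shiftedCube (a : EuclideanSpace ℝ (Fin d)) : Set (EuclideanSpace ℝ (Fin d)) :=
  {x | ∀ i, x i ∈ Ioc (a i) (a i + 1)}

lemma shiftedCube_eq_preimage (a : EuclideanSpace ℝ (Fin d)) :
    shiftedCube a = WithLp.ofLp ⁻¹' univ.pi fun i => Ioc (a i) (a i + 1) := by
  ext x
  simp only [shiftedCube, mem_ofPred_eq, mem_preimage, mem_univ_pi]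

lemma measurableSet_shiftedCube (a : EuclideanSpace ℝ (Fin d)) :
    MeasurableSet (shiftedCube a) := by
  rw [shiftedCube_eq_preimage]
  exact (WithLp.measurable_ofLp ..) (MeasurableSet.univ_pi fun _ => measurableSet_Ioc)

lemma volume_shiftedCube (a : EuclideanSpace ℝ (Fin d)) : volume (shiftedCube a) = 1 := by
  rw [shiftedCube_eq_preimage, (PiLp.volume_preserving_ofLp (Fin d)).measure_preimage
    (MeasurableSet.univ_pi fun _ => measurableSet_Ioc).nullMeasurableSet, Real.volume_pi_Ioc]
  simp

lemma isAddFundamentalDomain_shiftedCube (a : EuclideanSpace ℝ (Fin d)) :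
    IsAddFundamentalDomain (lattice d) (shiftedCube a) volume := by
  refine IsAddFundamentalDomain.mk' (measurableSet_shiftedCube a).nullMeasurableSet fun x => ?_
  have h : ∀ i, ∃! m : ℤ, x i + m • (1 : ℝ) ∈ Ioc (a i) (a i + 1) := fun i =>
    existsUnique_add_zsmul_mem_Ioc one_pos (x i) (a i)
  choose m hm hm_unique using h
  have mem_iff (z : Fin d → ℤ) : latticeVec d z + x ∈ shiftedCube a ↔
      ∀ i, x i + z i • (1 : ℝ) ∈ Ioc (a i) (a i + 1) := by
    simp [shiftedCube, latticeVec_apply, add_comm]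
  refine ⟨⟨latticeVec d m, m, rfl⟩, (mem_iff m).2 hm, ?_⟩
  rintro ⟨_, z, rfl⟩ hz
  obtain rfl : z = m := funext fun i => hm_unique i (z i) ((mem_iff z).1 hz i)
  rfl

lemma cube_eq_shiftedCube (d : ℕ) :
    cube d = shiftedCube (WithLp.toLp 2 fun _ : Fin d => (-(1 / 2) : ℝ)) := by
  ext x
  simp only [cube, shiftedCube, mem_ofPred_eq]
  norm_num

lemma measurableSet_cube (d : ℕ) : MeasurableSet (cube d) := by
  rw [cube_eq_shiftedCube]
  exact measurableSet_shiftedCube _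

instance isProbabilityMeasure_restrict_cube :
    IsProbabilityMeasure (volume.restrict (cube d)) :=
  ⟨by rw [Measure.restrict_apply_univ, cube_eq_shiftedCube, volume_shiftedCube]⟩

lemma preimage_add_left_shiftedCube (x a : EuclideanSpace ℝ (Fin d)) :
    (fun y => x + y) ⁻¹' shiftedCube (x + a) = shiftedCube a := by
  ext y
  simp only [shiftedCube, mem_preimage, mem_ofPred_eq, PiLp.add_apply, mem_Ioc,
    add_lt_add_iff_left, add_assoc, add_le_add_iff_left]

theorem map_torusDist_restrict_cube (x : EuclideanSpace ℝ (Fin d)) :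
    (volume.restrict (cube d)).map (torusDist x) = (volume.restrict (cube d)).map (‖·‖) := by
  have hx : Measurable (torusDist x) := measurable_torusDist measurable_const measurable_id
  ext s hs
  rw [Measure.map_apply hx hs, Measure.map_apply measurable_norm hs,
    Measure.restrict_apply (hx hs), Measure.restrict_apply (measurable_norm hs),
    cube_eq_shiftedCube]
  set a : EuclideanSpace ℝ (Fin d) := WithLp.toLp 2 fun _ => (-(1 / 2) : ℝ)
  have h_inv (v : lattice d) : (v +ᵥ ·) ⁻¹' (torusDist x ⁻¹' s) = torusDist x ⁻¹' s := by
    ext y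
    simp only [mem_preimage, torusDist_vadd_right]
  calc
    volume (torusDist x ⁻¹' s ∩ shiftedCube a)
    _ = volume (torusDist x ⁻¹' s ∩ shiftedCube (x + a)) :=
      (isAddFundamentalDomain_shiftedCube a).measure_set_eq
        (isAddFundamentalDomain_shiftedCube (x + a)) (hx hs) h_inv
    _ = volume ((x + ·) ⁻¹' (torusDist x ⁻¹' s) ∩ shiftedCube a) := by
      rw [← measure_preimage_add volume x, preimage_inter, preimage_add_left_shiftedCube]
    _ = volume ((‖·‖) ⁻¹' s ∩ shiftedCube a) := by
      congr 1
      ext y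
      refine and_congr_left fun hy => ?_
      rw [← cube_eq_shiftedCube] at hy
      simp only [mem_preimage, torusDist_comm x, torusDist_add_left_of_mem_cube x hy]

lemma restrict_cube_torusDist_le (x : EuclideanSpace ℝ (Fin d)) (s : ℝ) :
    volume.restrict (cube d) {y | torusDist x y ≤ s} ≤
      volume (Metric.closedBall (0 : EuclideanSpace ℝ (Fin d)) s) := by
  have hx : Measurable (torusDist x) := measurable_torusDist measurable_const measurable_id
  calc
    volume.restrict (cube d) (torusDist x ⁻¹' Iic s)
    _ = volume.restrict (cube d) ((‖·‖) ⁻¹' Iic s) := by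
      rw [← Measure.map_apply hx measurableSet_Iic, map_torusDist_restrict_cube,
        Measure.map_apply measurable_norm measurableSet_Iic]
    _ ≤ volume (Metric.closedBall (0 : EuclideanSpace ℝ (Fin d)) s) := by
      refine (Measure.restrict_apply_le _ _).trans (measure_mono fun y hy => ?_)
      simpa using hy

end Torus

/-- A connection function: the probability of an edge as a function of the distance, with any
scale parameter absorbed. It is total on `ℝ`, although only distances `t ≥ 0` matter. -/
structure IsConnFun (φ : ℝ → ℝ) : Prop where
  antitone : Antitone φ
  mem_Icc : ∀ t, φ t ∈ Icc (0 : ℝ) 1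

/-- The probability that a given point of the torus is joined to an independent uniform point, when
edges are drawn according to the connection function `φ`. -/
def connProb (d : ℕ) (φ : ℝ → ℝ) : ℝ :=
  ∫ y in cube d, φ ‖y‖

namespace IsConnFun

variable {φ : ℝ → ℝ}

lemma measurable (hφ : IsConnFun φ) : Measurable φ := hφ.antitone.measurable

lemma nonneg (hφ : IsConnFun φ) (t : ℝ) : 0 ≤ φ t := (hφ.mem_Icc t).1

lemma le_one (hφ : IsConnFun φ) (t : ℝ) : φ t ≤ 1 := (hφ.mem_Icc t).2

lemma integrable_comp (hφ : IsConnFun φ) {β : Type*} [MeasurableSpace β] {μ : Measure β}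
    [IsFiniteMeasure μ] {f : β → ℝ} (hf : Measurable f) : Integrable (fun y => φ (f y)) μ :=
  .of_mem_Icc 0 1 (hφ.measurable.comp hf).aemeasurable (ae_of_all _ fun y => hφ.mem_Icc (f y))

lemma integrable_torusDist (hφ : IsConnFun φ) (x : EuclideanSpace ℝ (Fin d)) :
    Integrable (fun y => φ (torusDist x y)) (volume.restrict (cube d)) :=
  hφ.integrable_comp (measurable_torusDist measurable_const measurable_id)

lemma setIntegral_torusDist (hφ : IsConnFun φ) (x : EuclideanSpace ℝ (Fin d)) :
    ∫ y in cube d, φ (torusDist x y) = connProb d φ := by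
  have hx : Measurable (torusDist x) := measurable_torusDist measurable_const measurable_id
  rw [connProb, ← integral_map hx.aemeasurable hφ.measurable.aestronglyMeasurable,
    map_torusDist_restrict_cube,
    integral_map measurable_norm.aemeasurable hφ.measurable.aestronglyMeasurable]

lemma connProb_nonneg (hφ : IsConnFun φ) (d : ℕ) : 0 ≤ connProb d φ :=
  integral_nonneg fun _ => hφ.nonneg _

lemma connProb_le_one (hφ : IsConnFun φ) (d : ℕ) : connProb d φ ≤ 1 := by
  have h := integral_mono (hφ.integrable_comp measurable_norm)
    (integrable_const (μ := volume.restrict (cube d)) (1 : ℝ)) fun y => hφ.le_one _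
  simpa [connProb] using h

lemma connProb_le_integral (hφ : IsConnFun φ)
    (h_int : Integrable fun x : EuclideanSpace ℝ (Fin d) => φ ‖x‖) :
    connProb d φ ≤ ∫ x : EuclideanSpace ℝ (Fin d), φ ‖x‖ :=
  setIntegral_le_integral h_int (ae_of_all _ fun _ => hφ.nonneg _)

lemma mul_volume_closedBall_le_integral (hφ : IsConnFun φ)
    (h_int : Integrable fun x : EuclideanSpace ℝ (Fin d) => φ ‖x‖) (t : ℝ) :
    φ t * volume.real (Metric.closedBall (0 : EuclideanSpace ℝ (Fin d)) t) ≤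
      ∫ x : EuclideanSpace ℝ (Fin d), φ ‖x‖ :=
  calc
    φ t * volume.real (Metric.closedBall (0 : EuclideanSpace ℝ (Fin d)) t)
    _ = ∫ _ in Metric.closedBall (0 : EuclideanSpace ℝ (Fin d)) t, φ t := by
      rw [setIntegral_const, smul_eq_mul, mul_comm]
    _ ≤ ∫ x in Metric.closedBall (0 : EuclideanSpace ℝ (Fin d)) t, φ ‖x‖ :=
      setIntegral_mono_on (integrableOn_const measure_closedBall_lt_top.ne) h_int.integrableOn
        measurableSet_closedBall fun x hx => hφ.antitone (mem_closedBall_zero_iff.1 hx)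
    _ ≤ ∫ x, φ ‖x‖ := setIntegral_le_integral h_int (ae_of_all _ fun _ => hφ.nonneg _)

/-- Every point `y` is at distance at least half of `torusDist x x'` from one of `x`, `x'`. -/
lemma mul_torusDist_le (hφ : IsConnFun φ) {x x' : EuclideanSpace ℝ (Fin d)} {s : ℝ}
    (hs : s ≤ torusDist x x') (y : EuclideanSpace ℝ (Fin d)) :
    φ (torusDist x y) * φ (torusDist x' y) ≤
      φ (s / 2) * (φ (torusDist x y) + φ (torusDist x' y)) := by
  have h_tri := torusDist_triangle x y x'
  rw [torusDist_comm y x'] at h_tri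
  have h₁ := hφ.nonneg (torusDist x y)
  have h₂ := hφ.nonneg (torusDist x' y)
  have h₃ := hφ.nonneg (s / 2)
  rcases le_total (s / 2) (torusDist x y) with h | h
  · nlinarith [hφ.antitone h]
  · nlinarith [hφ.antitone (show s / 2 ≤ torusDist x' y by linarith)]

lemma lintegral_one_sub_torusDist (hφ : IsConnFun φ) (x : EuclideanSpace ℝ (Fin d)) :
    ∫⁻ y in cube d, ENNReal.ofReal (1 - φ (torusDist x y)) =
      ENNReal.ofReal (1 - connProb d φ) := by
  have h_int : Integrable (fun y => 1 - φ (torusDist x y)) (volume.restrict (cube d)) :=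
    (integrable_const 1).sub (hφ.integrable_torusDist x)
  rw [← ofReal_integral_eq_lintegral_ofReal h_int (ae_of_all _ fun y => sub_nonneg.2 (hφ.le_one _)),
    integral_sub (integrable_const 1) (hφ.integrable_torusDist x), hφ.setIntegral_torusDist]
  simp

lemma lintegral_one_sub_mul_one_sub_le (hφ : IsConnFun φ) (x x' : EuclideanSpace ℝ (Fin d)) :
    ∫⁻ y in cube d, ENNReal.ofReal (1 - φ (torusDist x y)) *
      ENNReal.ofReal (1 - φ (torusDist x' y)) ≤ ENNReal.ofReal (1 - connProb d φ) := by
  rw [← hφ.lintegral_one_sub_torusDist x]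
  refine lintegral_mono fun y => mul_le_of_le_one_right' ?_
  exact ENNReal.ofReal_le_one.2 (sub_le_self 1 (hφ.nonneg _))

lemma lintegral_one_sub_mul_one_sub_le_of_le_torusDist (hφ : IsConnFun φ)
    {x x' : EuclideanSpace ℝ (Fin d)} {s : ℝ} (hs : s ≤ torusDist x x') :
    ∫⁻ y in cube d, ENNReal.ofReal (1 - φ (torusDist x y)) *
      ENNReal.ofReal (1 - φ (torusDist x' y)) ≤
      ENNReal.ofReal ((1 - connProb d φ) ^ 2 + 2 * connProb d φ * φ (s / 2)) := by
  have h_sum : Integrable (fun y => φ (torusDist x y) + φ (torusDist x' y))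
      (volume.restrict (cube d)) := (hφ.integrable_torusDist x).add (hφ.integrable_torusDist x')
  have h_int : Integrable
      (fun y => 1 - (1 - φ (s / 2)) * (φ (torusDist x y) + φ (torusDist x' y)))
      (volume.restrict (cube d)) := (integrable_const 1).sub (h_sum.const_mul _)
  have h_nonneg (y : EuclideanSpace ℝ (Fin d)) :
      0 ≤ (1 - φ (torusDist x y)) * (1 - φ (torusDist x' y)) :=
    mul_nonneg (sub_nonneg.2 (hφ.le_one _)) (sub_nonneg.2 (hφ.le_one _))
  have h_le (y : EuclideanSpace ℝ (Fin d)) :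
      (1 - φ (torusDist x y)) * (1 - φ (torusDist x' y)) ≤
        1 - (1 - φ (s / 2)) * (φ (torusDist x y) + φ (torusDist x' y)) := by
    linarith [hφ.mul_torusDist_le hs y]
  calc
    ∫⁻ y in cube d, ENNReal.ofReal (1 - φ (torusDist x y)) *
      ENNReal.ofReal (1 - φ (torusDist x' y))
    _ ≤ ∫⁻ y in cube d,
        ENNReal.ofReal (1 - (1 - φ (s / 2)) * (φ (torusDist x y) + φ (torusDist x' y))) := by
      refine lintegral_mono fun y => ?_
      rw [← ENNReal.ofReal_mul (sub_nonneg.2 (hφ.le_one _))]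
      exact ENNReal.ofReal_le_ofReal (h_le y)
    _ = ENNReal.ofReal (1 - (1 - φ (s / 2)) * (connProb d φ + connProb d φ)) := by
      rw [← ofReal_integral_eq_lintegral_ofReal h_int
        (ae_of_all _ fun y => (h_nonneg y).trans (h_le y)),
        integral_sub (integrable_const 1) (h_sum.const_mul _), integral_const_mul,
        integral_add (hφ.integrable_torusDist x) (hφ.integrable_torusDist x'),
        hφ.setIntegral_torusDist, hφ.setIntegral_torusDist]
      simp
    _ ≤ _ := ENNReal.ofReal_le_ofReal (by nlinarith [sq_nonneg (connProb d φ)])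

end IsConnFun

lemma cube_mem_nhds_zero (d : ℕ) : cube d ∈ nhds (0 : EuclideanSpace ℝ (Fin d)) := by
  refine mem_of_superset (Metric.ball_mem_nhds 0 one_half_pos) fun y hy i => ?_
  rw [mem_ball_zero_iff] at hy
  have h := abs_lt.1 ((PiLp.norm_apply_le y i).trans_lt hy)
  exact ⟨h.1, h.2.le⟩

open scoped Pointwise in
theorem tendsto_setIntegral_comp_inv_smul {E F : Type*} [NormedAddCommGroup E] [NormedSpace ℝ E]
    [MeasurableSpace E] [BorelSpace E] [FiniteDimensional ℝ E] [NormedAddCommGroup F]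
    [NormedSpace ℝ F] {μ : Measure E} [μ.IsAddHaarMeasure] {f : E → F} (hf : Integrable f μ)
    {s : Set E} (hs : s ∈ nhds 0) (hs_meas : MeasurableSet s) :
    Tendsto (fun r : ℝ => (r ^ Module.finrank ℝ E)⁻¹ • ∫ y in s, f (r⁻¹ • y) ∂μ)
      (nhdsWithin 0 (Ioi 0)) (nhds (∫ x, f x ∂μ)) := by
  have h_cover : AECover μ (nhdsWithin (0 : ℝ) (Ioi 0)) fun r => r⁻¹ • s := by
    refine ⟨ae_of_all _ fun x => ?_, fun r => hs_meas.const_smul₀ r⁻¹⟩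
    have h_zero : Tendsto (fun r : ℝ => r • x) (nhdsWithin 0 (Ioi 0)) (nhds 0) := by
      have : Continuous fun r : ℝ => r • x := by fun_prop
      simpa using (this.tendsto 0).mono_left nhdsWithin_le_nhds
    filter_upwards [h_zero hs, self_mem_nhdsWithin] with r hr (hr_pos : 0 < r)
    exact (mem_inv_smul_set_iff₀ hr_pos.ne' _ _).2 hr
  refine (h_cover.integral_tendsto_of_countably_generated hf).congr' ?_
  filter_upwards [self_mem_nhdsWithin] with r (hr : 0 < r)
  rw [Measure.setIntegral_comp_smul_of_pos μ f s (inv_pos.2 hr), inv_pow, inv_inv, smul_smul,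
    inv_mul_cancel₀ (pow_pos hr _).ne', one_smul]

section Independence

lemma lintegral_prodMk_of_indepFun [IsFiniteMeasure P] {β γ : Type*} [MeasurableSpace β]
    [MeasurableSpace γ] {X : Ω → β} {Y : Ω → γ} (hXY : IndepFun X Y P) (hX : Measurable X)
    (hY : Measurable Y) {F : β × γ → ENNReal} (hF : Measurable F) :
    ∫⁻ ω, F (X ω, Y ω) ∂P = ∫⁻ ω, ∫⁻ ω', F (X ω, Y ω') ∂P ∂P := by
  rw [← lintegral_map hF (hX.prodMk hY),
    hXY.map_prod_eq_prod_map_map hX.aemeasurable hY.aemeasurable, lintegral_prod _ hF.aemeasurable,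
    lintegral_map hF.lintegral_prod_right' hX]
  exact lintegral_congr fun ω => lintegral_map (hF.comp measurable_prodMk_left) hY

lemma measure_prodMk_mem_of_indepFun [IsFiniteMeasure P] {β γ : Type*} [MeasurableSpace β]
    [MeasurableSpace γ] {X : Ω → β} {Y : Ω → γ} (hXY : IndepFun X Y P) (hX : Measurable X)
    (hY : Measurable Y) {S : Set (β × γ)} (hS : MeasurableSet S) :
    P {ω | (X ω, Y ω) ∈ S} = ∫⁻ ω, P {ω' | (X ω, Y ω') ∈ S} ∂P := by
  refine (lintegral_indicator_one ((hX.prodMk hY) hS)).symm.trans ?_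
  refine (lintegral_prodMk_of_indepFun hXY hX hY (measurable_one.indicator hS)).trans ?_
  exact lintegral_congr fun ω => lintegral_indicator_one ((measurable_const.prodMk hY) hS)

theorem lintegral_prod_eq_lintegral_pow_of_iIndepFun [IsProbabilityMeasure P] {ι E : Type*}
    [MeasurableSpace E] {μ : Measure E} {Y : ι → Ω → E} (hY : iIndepFun Y P)
    (hY_meas : ∀ i, Measurable (Y i)) (hY_law : ∀ i, P.map (Y i) = μ) {T K : Finset ι}
    (hTK : Disjoint T K) {Φ : (T → E) → E → ENNReal} (hΦ : Measurable (Function.uncurry Φ)) :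
    ∫⁻ ω, ∏ k ∈ K, Φ (fun t => Y t ω) (Y k ω) ∂P =
      ∫⁻ ω, (∫⁻ y, Φ (fun t => Y t ω) y ∂μ) ^ K.card ∂P := by
  have h_indep := hY.indepFun_finset T K hTK hY_meas
  have hF : Measurable fun q : (T → E) × (K → E) => ∏ k : K, Φ q.1 (q.2 k) :=
    Finset.measurable_prod _ fun k _ =>
      hΦ.comp (measurable_fst.prodMk ((measurable_pi_apply k).comp measurable_snd))
  have h := lintegral_prodMk_of_indepFun h_indep (measurable_pi_lambda _ fun t => hY_meas t)
    (measurable_pi_lambda _ fun k => hY_meas k) hF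
  simp only [← Finset.prod_coe_sort K]
  refine h.trans (lintegral_congr fun ω => ?_)
  set y : T → E := fun t => Y t ω
  have hΦy : Measurable (Φ y) := hΦ.comp measurable_prodMk_left
  have h_single (k : ι) : ∫⁻ ω', Φ y (Y k ω') ∂P = ∫⁻ z, Φ y z ∂μ := by
    rw [← hY_law k, lintegral_map hΦy (hY_meas k)]
  have h_coe (ω' : Ω) : ∏ k : K, Φ y (Y k ω') = ∏ k ∈ K, Φ y (Y k ω') :=
    Finset.prod_coe_sort K fun k => Φ y (Y k ω')
  simp only [h_coe]
  rw [lintegral_prod_eq_prod_lintegral_of_indepFun K (fun k ω' => Φ y (Y k ω'))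
    (hY.comp (fun _ => Φ y) fun _ => hΦy) fun k => hΦy.comp (hY_meas k)]
  simp only [h_single, Finset.prod_const]

lemma measure_lt_of_map_eq_restrict_Icc {V : Ω → ℝ} (hV : Measurable V)
    (hV_law : P.map V = volume.restrict (Icc 0 1)) {a : ℝ} (ha : 0 ≤ a) :
    P {ω | a < V ω} = ENNReal.ofReal (1 - a) := by
  have h_inter : Ioi a ∩ Icc 0 1 = Ioc a 1 := by
    ext x
    exact ⟨fun h => ⟨h.1, h.2.2⟩, fun h => ⟨h.1, ha.trans h.1.le, h.2⟩⟩
  calc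
    P {ω | a < V ω} = P.map V (Ioi a) := (Measure.map_apply hV measurableSet_Ioi).symm
    _ = ENNReal.ofReal (1 - a) := by
      rw [hV_law, Measure.restrict_apply measurableSet_Ioi, h_inter, Real.volume_Ioc]

lemma measure_forall_lt_of_map_eq_restrict_Icc {ι : Type*} [Fintype ι] {V : ι → Ω → ℝ}
    (hV : iIndepFun V P) (hV_meas : ∀ i, Measurable (V i))
    (hV_law : ∀ i, P.map (V i) = volume.restrict (Icc 0 1)) {a : ι → ℝ} (ha : ∀ i, 0 ≤ a i) :
    P {ω | ∀ i, a i < V i ω} = ∏ i, ENNReal.ofReal (1 - a i) := by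
  have h_inter : {ω | ∀ i, a i < V i ω} = ⋂ i ∈ Finset.univ, V i ⁻¹' Ioi (a i) := by
    ext ω
    simp
  rw [h_inter, hV.measure_inter_preimage_eq_mul Finset.univ fun _ _ => measurableSet_Ioi]
  exact Finset.prod_congr rfl fun i _ =>
    measure_lt_of_map_eq_restrict_Icc (hV_meas i) (hV_law i) (ha i)

end Independence

section SecondMoment

lemma measureReal_eq_zero_le_variance_div_sq [IsFiniteMeasure P] {W : Ω → ℝ} (hW : MemLp W 2 P)
    (h_pos : 0 < ∫ ω, W ω ∂P) :
    P.real {ω | W ω = 0} ≤ Var[W; P] / (∫ ω, W ω ∂P) ^ 2 := by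
  refine ENNReal.toReal_le_of_le_ofReal
    (div_nonneg (variance_nonneg W P) (sq_nonneg _))
    ((measure_mono fun ω hω => ?_).trans (meas_ge_le_variance_div_sq hW h_pos))
  have hω' : W ω = 0 := hω
  simp only [mem_ofPred_eq, hω', zero_sub, abs_neg, le_abs_self]

variable {ι : Type*} {s : Finset ι} {E : ι → Set Ω}

lemma integral_sum_indicator_one [IsFiniteMeasure P] (hE : ∀ i ∈ s, MeasurableSet (E i)) :
    ∫ ω, ∑ i ∈ s, (E i).indicator (1 : Ω → ℝ) ω ∂P = ∑ i ∈ s, P.real (E i) := by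
  have h_int (i : ι) (hi : i ∈ s) : Integrable ((E i).indicator (1 : Ω → ℝ)) P :=
    (integrable_const (1 : ℝ)).indicator (hE i hi)
  rw [integral_finsetSum s h_int]
  exact Finset.sum_congr rfl fun i hi => integral_indicator_one (hE i hi)

lemma integral_sq_sum_indicator_one [IsFiniteMeasure P] (hE : ∀ i ∈ s, MeasurableSet (E i)) :
    ∫ ω, (∑ i ∈ s, (E i).indicator (1 : Ω → ℝ) ω) ^ 2 ∂P =
      ∑ p ∈ s ×ˢ s, P.real (E p.1 ∩ E p.2) := by
  rw [← integral_sum_indicator_one fun p hp =>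
    (hE p.1 (Finset.mem_product.1 hp).1).inter (hE p.2 (Finset.mem_product.1 hp).2)]
  refine integral_congr_ae (ae_of_all _ fun ω => ?_)
  simp only [sq, Finset.sum_mul_sum, Finset.sum_product, inter_indicator_one, Pi.mul_apply]

lemma memLp_sum_indicator_one [IsFiniteMeasure P] (hE : ∀ i ∈ s, MeasurableSet (E i))
    (p : ENNReal) : MemLp (fun ω => ∑ i ∈ s, (E i).indicator (1 : Ω → ℝ) ω) p P :=
  memLp_finsetSum s fun i hi => memLp_indicator_const p (hE i hi) 1 (.inr (measure_ne_top P _))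

lemma sum_product_measureReal_inter_le {q v : ℝ} (hv_nonneg : 0 ≤ v)
    (hq : ∀ i ∈ s, P.real (E i) = q)
    (hv : ∀ i ∈ s, ∀ j ∈ s, i ≠ j → P.real (E i ∩ E j) ≤ v) :
    ∑ p ∈ s ×ˢ s, P.real (E p.1 ∩ E p.2) ≤ s.card * q + s.card ^ 2 * v := by
  classical
  have h_le (i : ι) (hi : i ∈ s) (j : ι) (hj : j ∈ s) :
      P.real (E i ∩ E j) ≤ (if i = j then q else 0) + v := by
    split_ifs with hij
    · rw [← hij, inter_self, hq i hi]
      exact le_add_of_nonneg_right hv_nonneg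
    · rw [zero_add]
      exact hv i hi j hj hij
  calc
    ∑ p ∈ s ×ˢ s, P.real (E p.1 ∩ E p.2)
    _ = ∑ i ∈ s, ∑ j ∈ s, P.real (E i ∩ E j) := Finset.sum_product _ _ _
    _ ≤ ∑ i ∈ s, ∑ j ∈ s, ((if i = j then q else 0) + v) :=
      Finset.sum_le_sum fun i hi => Finset.sum_le_sum (h_le i hi)
    _ = s.card * q + s.card ^ 2 * v := by
      simp only [Finset.sum_add_distrib, Finset.sum_ite_eq, Finset.sum_ite_mem, Finset.inter_self,
        Finset.sum_const, nsmul_eq_mul]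
      ring

theorem measureReal_forall_notMem_le [IsProbabilityMeasure P] (hs : s.Nonempty)
    (hE : ∀ i ∈ s, MeasurableSet (E i)) {q v : ℝ} (hq_pos : 0 < q) (hv_nonneg : 0 ≤ v)
    (hq : ∀ i ∈ s, P.real (E i) = q)
    (hv : ∀ i ∈ s, ∀ j ∈ s, i ≠ j → P.real (E i ∩ E j) ≤ v) :
    P.real {ω | ∀ i ∈ s, ω ∉ E i} ≤ 1 / (s.card * q) + v / q ^ 2 - 1 := by
  have h_card : (0 : ℝ) < s.card := by exact_mod_cast hs.card_pos
  set W : Ω → ℝ := fun ω => ∑ i ∈ s, (E i).indicator 1 ω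
  have hW : MemLp W 2 P := memLp_sum_indicator_one hE 2
  have h_mean : ∫ ω, W ω ∂P = s.card * q := by
    rw [integral_sum_indicator_one hE, Finset.sum_congr rfl hq, Finset.sum_const, nsmul_eq_mul]
  have h_sq : ∫ ω, (W ^ 2) ω ∂P ≤ s.card * q + s.card ^ 2 * v :=
    (integral_sq_sum_indicator_one hE).trans_le (sum_product_measureReal_inter_le hv_nonneg hq hv)
  calc
    P.real {ω | ∀ i ∈ s, ω ∉ E i}
    _ ≤ P.real {ω | W ω = 0} :=
      measureReal_mono fun ω hω => Finset.sum_eq_zero fun i hi => indicator_of_notMem (hω i hi) _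
    _ ≤ Var[W; P] / (∫ ω, W ω ∂P) ^ 2 :=
      measureReal_eq_zero_le_variance_div_sq hW (h_mean ▸ mul_pos h_card hq_pos)
    _ ≤ (s.card * q + s.card ^ 2 * v - (s.card * q) ^ 2) / (s.card * q) ^ 2 := by
      rw [variance_eq_sub hW, h_mean]
      gcongr
    _ = 1 / (s.card * q) + v / q ^ 2 - 1 := by field_simp

end SecondMoment

section AlmostSure

theorem ae_eventually_notMem_of_le_summable [IsFiniteMeasure P] {s : ℕ → Set Ω} {b : ℕ → ℝ}
    (hb : Summable b) (h_le : ∀ᶠ k in atTop, P.real (s k) ≤ b k) :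
    ∀ᵐ ω ∂P, ∀ᶠ k in atTop, ω ∉ s k := by
  have hs : Summable fun k => P.real (s k) := by
    refine hb.of_norm_bounded_eventually_nat ?_
    filter_upwards [h_le] with k hk
    rwa [Real.norm_of_nonneg measureReal_nonneg]
  refine ae_eventually_notMem ?_
  simpa only [ofReal_measureReal (measure_ne_top P _)] using hs.tsum_ofReal_ne_top

theorem ae_tendsto_of_forall_ae_eventually_mem_Icc {ι κ : Type*} {l : Filter ι} [l.NeBot]
    [l.IsCountablyGenerated] {l' : Filter κ} {f : κ → Ω → ℝ} {a b : ι → ℝ} {x : ℝ}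
    (ha : Tendsto a l (nhds x)) (hb : Tendsto b l (nhds x))
    (hf : ∀ᶠ i in l, ∀ᵐ ω ∂P, ∀ᶠ n in l', f n ω ∈ Icc (a i) (b i)) :
    ∀ᵐ ω ∂P, Tendsto (fun n => f n ω) l' (nhds x) := by
  obtain ⟨i, hi⟩ := l.exists_seq_tendsto
  obtain ⟨m₀, hm₀⟩ := eventually_atTop.1 (hi.eventually hf)
  have h_all : ∀ᵐ ω ∂P, ∀ m ≥ m₀, ∀ᶠ n in l', f n ω ∈ Icc (a (i m)) (b (i m)) := by
    simpa only [ae_all_iff] using hm₀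
  filter_upwards [h_all] with ω hω
  refine tendsto_order.2 ⟨fun y hy => ?_, fun y hy => ?_⟩
  · obtain ⟨m, hm, hym⟩ :=
      ((eventually_ge_atTop m₀).and ((ha.comp hi).eventually_const_lt hy)).exists
    filter_upwards [hω m hm] with n hn using hym.trans_le hn.1
  · obtain ⟨m, hm, hym⟩ :=
      ((eventually_ge_atTop m₀).and ((hb.comp hi).eventually_lt_const hy)).exists
    filter_upwards [hω m hm] with n hn using hn.2.trans_lt hym

end AlmostSure

section Poisson

lemma hasSum_poisson_mul_exp (r t : ℝ) :
    HasSum (fun k : ℕ => Real.exp (-r) * r ^ k / k.factorial * Real.exp (t * k))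
      (Real.exp (r * (Real.exp t - 1))) := by
  have h := (NormedSpace.expSeries_div_hasSum_exp (r * Real.exp t : ℝ)).mul_left (Real.exp (-r))
  rw [← Real.exp_eq_exp_ℝ, ← Real.exp_add] at h
  rw [show r * (Real.exp t - 1) = -r + r * Real.exp t by ring]
  refine h.congr_fun fun k => ?_
  rw [mul_comm t, Real.exp_nat_mul, mul_pow]
  ring

variable {X : Ω → ℕ} {r : NNReal}

lemma integrable_exp_mul_of_hasLaw_poissonMeasure (hX : HasLaw X (poissonMeasure r) P) (t : ℝ) :
    Integrable (fun ω => Real.exp (t * X ω)) P := by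
  have h : Integrable (fun k : ℕ => Real.exp (t * k)) (poissonMeasure r) := by
    rw [integrable_poissonMeasure_iff]
    simpa only [Real.norm_eq_abs, Real.abs_exp] using (hasSum_poisson_mul_exp r t).summable
  rw [← hX.map_eq] at h
  exact h.comp_aemeasurable hX.aemeasurable

lemma mgf_of_hasLaw_poissonMeasure (hX : HasLaw X (poissonMeasure r) P) (t : ℝ) :
    mgf (fun ω => (X ω : ℝ)) P t = Real.exp (r * (Real.exp t - 1)) :=
  calc
    ∫ ω, Real.exp (t * X ω) ∂P
    _ = ∫ k : ℕ, Real.exp (t * k) ∂poissonMeasure r :=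
      hX.integral_comp (f := fun k : ℕ => Real.exp (t * k)) (by fun_prop)
    _ = Real.exp (r * (Real.exp t - 1)) := by
      rw [integral_poissonMeasure]
      exact (hasSum_poisson_mul_exp r t).tsum_eq

lemma H_pos {x : ℝ} (hx : 0 < x) (hx₁ : x ≠ 1) : 0 < H x := by
  have h_log : Real.log x⁻¹ < x⁻¹ - 1 :=
    Real.log_lt_sub_one_of_pos (inv_pos.2 hx) (inv_ne_one.2 hx₁)
  have h := mul_lt_mul_of_pos_left h_log hx
  rw [Real.log_inv, mul_sub, mul_inv_cancel₀ hx.ne'] at h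
  unfold H
  linarith

variable [IsProbabilityMeasure P]

/-- Chernoff's bound with exponent `log x`. -/
lemma measureReal_mul_le_of_hasLaw_poissonMeasure (hX : HasLaw X (poissonMeasure r) P) {x : ℝ}
    (hx : 1 ≤ x) : P.real {ω | x * r ≤ X ω} ≤ Real.exp (r * -H x) := by
  refine (measure_ge_le_exp_mul_mgf (x * r) (Real.log_nonneg hx)
    (integrable_exp_mul_of_hasLaw_poissonMeasure hX _)).trans_eq ?_
  rw [mgf_of_hasLaw_poissonMeasure hX, ← Real.exp_add, Real.exp_log (one_pos.trans_le hx), H]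
  ring_nf

lemma measureReal_le_mul_of_hasLaw_poissonMeasure (hX : HasLaw X (poissonMeasure r) P) {x : ℝ}
    (hx : 0 < x) (hx₁ : x ≤ 1) : P.real {ω | (X ω : ℝ) ≤ x * r} ≤ Real.exp (r * -H x) := by
  refine (measure_le_le_exp_mul_mgf (x * r) (Real.log_nonpos hx.le hx₁)
    (integrable_exp_mul_of_hasLaw_poissonMeasure hX _)).trans_eq ?_
  rw [mgf_of_hasLaw_poissonMeasure hX, ← Real.exp_add, Real.exp_log hx, H]
  ring_nf

theorem ae_eventually_mem_Ioo_of_hasLaw_poissonMeasure {Y : ℕ → Ω → ℕ}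
    (hY : ∀ n : ℕ, HasLaw (Y n) (poissonMeasure n) P) {a b : ℝ} (ha : 0 < a) (ha₁ : a < 1)
    (hb : 1 < b) : ∀ᵐ ω ∂P, ∀ᶠ n : ℕ in atTop, (Y n ω : ℝ) ∈ Ioo (a * n) (b * n) := by
  have h_summable {x : ℝ} (hx : 0 < x) (hx₁ : x ≠ 1) :
      Summable fun n : ℕ => Real.exp (n * -H x) :=
    Real.summable_exp_nat_mul_iff.2 (neg_neg_of_pos (H_pos hx hx₁))
  filter_upwards [
    ae_eventually_notMem_of_le_summable (h_summable ha ha₁.ne) (Eventually.of_forall fun n =>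
      measureReal_le_mul_of_hasLaw_poissonMeasure (hY n) ha ha₁.le),
    ae_eventually_notMem_of_le_summable (h_summable (one_pos.trans hb) hb.ne')
      (Eventually.of_forall fun n => measureReal_mul_le_of_hasLaw_poissonMeasure (hY n) hb.le)]
    with ω hω_lower hω_upper
  filter_upwards [hω_lower, hω_upper] with n h_lower h_upper
  exact ⟨not_le.1 h_lower, not_le.1 h_upper⟩

end Poisson

namespace Model

/-- The position of vertex `i + 1`, so that positions are indexed from `0`. -/
def pt (M : Model d P) (i : ℕ) (ω : Ω) : EuclideanSpace ℝ (Fin d) := M.X (i + 1) ω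

/-- The edge variable of the unordered pair of vertices `{i + 1, j + 1}`. -/
def edgeVar (M : Model d P) (i j : ℕ) (ω : Ω) : ℝ := M.U (min i j + 1) (max i j + 1) ω

/-- Vertices `i + 1` and `j + 1` are not joined by an edge when edges are drawn according to the
connection function `φ`. -/
def NonAdj (M : Model d P) (φ : ℝ → ℝ) (i j : ℕ) (ω : Ω) : Prop :=
  φ (torusDist (M.pt i ω) (M.pt j ω)) < M.edgeVar i j ω

variable (M : Model d P)

lemma measurable_pt (i : ℕ) : Measurable (M.pt i) := M.X_meas _

lemma map_pt (i : ℕ) : P.map (M.pt i) = volume.restrict (cube d) := M.X_unif _ i.succ_pos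

lemma iIndepFun_pt : iIndepFun M.pt P :=
  M.X_indep.precomp (g := fun i : ℕ => (⟨i + 1, i.succ_pos⟩ : {i : ℕ // 1 ≤ i}))
    fun i j h => by simpa using h

lemma measurable_edgeVar (i j : ℕ) : Measurable (M.edgeVar i j) := M.U_meas _ _

lemma map_edgeVar {i j : ℕ} (hij : i ≠ j) :
    P.map (M.edgeVar i j) = volume.restrict (Icc 0 1) :=
  M.U_unif _ _ (by omega) (by omega)

lemma iIndepFun_edgeVar {T K : Finset ℕ} (hTK : Disjoint T K) :
    iIndepFun (fun p : ↥(K ×ˢ T) => M.edgeVar p.1.2 p.1.1) P := by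
  have h_ne (p q : ↥(K ×ˢ T)) : p.1.2 ≠ q.1.1 :=
    Finset.disjoint_iff_ne.1 hTK _ (Finset.mem_product.1 p.2).2 _ (Finset.mem_product.1 q.2).1
  refine M.U_indep.precomp (g := fun p : ↥(K ×ˢ T) =>
    (⟨(min p.1.2 p.1.1 + 1, max p.1.2 p.1.1 + 1), ?_⟩ :
      {p : ℕ × ℕ // 1 ≤ p.1 ∧ p.1 < p.2})) ?_
  · have := h_ne p p
    constructor <;> dsimp only <;> omega
  · intro p q h
    have h_qp := h_ne q p
    simp only [Subtype.mk.injEq, Prod.mk.injEq] at h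
    ext <;> omega

lemma measure_forall_lt_edgeVar {T K : Finset ℕ} (hTK : Disjoint T K) {a : ℕ → ℕ → ℝ}
    (ha : ∀ t k, 0 ≤ a t k) :
    P {ω | ∀ t ∈ T, ∀ k ∈ K, a t k < M.edgeVar t k ω} =
      ∏ k ∈ K, ∏ t ∈ T, ENNReal.ofReal (1 - a t k) := by
  have h_ne (p : ↥(K ×ˢ T)) : p.1.2 ≠ p.1.1 :=
    Finset.disjoint_iff_ne.1 hTK _ (Finset.mem_product.1 p.2).2 _ (Finset.mem_product.1 p.2).1
  calc
    P {ω | ∀ t ∈ T, ∀ k ∈ K, a t k < M.edgeVar t k ω}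
    _ = P {ω | ∀ p : ↥(K ×ˢ T), a p.1.2 p.1.1 < M.edgeVar p.1.2 p.1.1 ω} := by
      congr 1 with ω
      simp only [mem_ofPred_eq, Subtype.forall, Finset.mem_product, Prod.forall]
      exact ⟨fun h k t hkt => h t hkt.2 k hkt.1, fun h t ht k hk => h k t ⟨hk, ht⟩⟩
    _ = ∏ p : ↥(K ×ˢ T), ENNReal.ofReal (1 - a p.1.2 p.1.1) :=
      measure_forall_lt_of_map_eq_restrict_Icc (M.iIndepFun_edgeVar hTK)
        (fun _ => M.measurable_edgeVar _ _) (fun p => M.map_edgeVar (h_ne p)) fun _ => ha _ _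
    _ = ∏ k ∈ K, ∏ t ∈ T, ENNReal.ofReal (1 - a t k) := by
      rw [Finset.prod_coe_sort (K ×ˢ T) fun p => ENNReal.ofReal (1 - a p.2 p.1),
        Finset.prod_product' K T fun k t => ENNReal.ofReal (1 - a t k)]

lemma indepFun_X_U :
    IndepFun (fun ω => fun i : ℕ => M.X i ω) (fun ω => fun p : ℕ × ℕ => M.U p.1 p.2 ω) P :=
  M.families_indep.indep (i := 0) (j := 2) (by decide)

variable {φ : ℝ → ℝ}

lemma measurableSet_nonAdj (hφ : IsConnFun φ) (i j : ℕ) : MeasurableSet {ω | M.NonAdj φ i j ω} :=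
  measurableSet_lt
    (hφ.measurable.comp (measurable_torusDist (M.measurable_pt i) (M.measurable_pt j)))
    (M.measurable_edgeVar i j)

section Measure

variable [IsProbabilityMeasure P]

lemma measure_forall_nonAdj_eq_lintegral_prod (hφ : IsConnFun φ) {T K : Finset ℕ}
    (hTK : Disjoint T K) :
    P {ω | ∀ t ∈ T, ∀ k ∈ K, M.NonAdj φ t k ω} =
      ∫⁻ ω, ∏ k ∈ K, ∏ t ∈ T,
        ENNReal.ofReal (1 - φ (torusDist (M.pt t ω) (M.pt k ω))) ∂P := by
  set S : Set ((ℕ → EuclideanSpace ℝ (Fin d)) × (ℕ × ℕ → ℝ)) := ⋂ t ∈ T, ⋂ k ∈ K,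
    {q | φ (torusDist (q.1 (t + 1)) (q.1 (k + 1))) < q.2 (min t k + 1, max t k + 1)}
  have hS : MeasurableSet S :=
    Finset.measurableSet_biInter _ fun t _ => Finset.measurableSet_biInter _ fun k _ =>
      measurableSet_lt (hφ.measurable.comp (measurable_torusDist (by fun_prop) (by fun_prop)))
        (by fun_prop)
  have h_iff (x : ℕ → EuclideanSpace ℝ (Fin d)) (ω : Ω) :
      (x, fun p : ℕ × ℕ => M.U p.1 p.2 ω) ∈ S ↔
        ∀ t ∈ T, ∀ k ∈ K, φ (torusDist (x (t + 1)) (x (k + 1))) < M.edgeVar t k ω := by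
    simp only [S, mem_iInter, mem_ofPred_eq, edgeVar]
  calc
    P {ω | ∀ t ∈ T, ∀ k ∈ K, M.NonAdj φ t k ω}
    _ = P {ω | (fun i => M.X i ω, fun p : ℕ × ℕ => M.U p.1 p.2 ω) ∈ S} := by
      simp only [h_iff, NonAdj, pt]
    _ = ∫⁻ ω, P {ω' | (fun i => M.X i ω, fun p : ℕ × ℕ => M.U p.1 p.2 ω') ∈ S} ∂P :=
      measure_prodMk_mem_of_indepFun M.indepFun_X_U (measurable_pi_lambda _ M.X_meas)
        (measurable_pi_lambda _ fun p => M.U_meas p.1 p.2) hS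
    _ = _ := by
      refine lintegral_congr fun ω => ?_
      simp only [h_iff]
      exact M.measure_forall_lt_edgeVar hTK
        (a := fun t k => φ (torusDist (M.pt t ω) (M.pt k ω))) fun _ _ => hφ.nonneg _

theorem measure_forall_nonAdj (hφ : IsConnFun φ) {T K : Finset ℕ} (hTK : Disjoint T K) :
    P {ω | ∀ t ∈ T, ∀ k ∈ K, M.NonAdj φ t k ω} =
      ∫⁻ ω, (∫⁻ y in cube d, ∏ t ∈ T, ENNReal.ofReal (1 - φ (torusDist (M.pt t ω) y))) ^ K.card
        ∂P := by
  have h_meas : Measurable (Function.uncurry fun (x : T → EuclideanSpace ℝ (Fin d)) y =>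
      ∏ t : T, ENNReal.ofReal (1 - φ (torusDist (x t) y))) :=
    Finset.measurable_prod _ fun t _ => (measurable_const.sub (hφ.measurable.comp
      (measurable_torusDist ((measurable_pi_apply t).comp measurable_fst)
        measurable_snd))).ennreal_ofReal
  have h := lintegral_prod_eq_lintegral_pow_of_iIndepFun M.iIndepFun_pt M.measurable_pt M.map_pt
    hTK h_meas
  have h_coe (ω : Ω) (y : EuclideanSpace ℝ (Fin d)) :
      ∏ t : T, ENNReal.ofReal (1 - φ (torusDist (M.pt t ω) y)) =
        ∏ t ∈ T, ENNReal.ofReal (1 - φ (torusDist (M.pt t ω) y)) :=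
    Finset.prod_coe_sort T fun t => ENNReal.ofReal (1 - φ (torusDist (M.pt t ω) y))
  simp only [h_coe] at h
  rw [M.measure_forall_nonAdj_eq_lintegral_prod hφ hTK, h]

lemma measure_forall_nonAdj_of_notMem (hφ : IsConnFun φ) {i : ℕ} {K : Finset ℕ} (hi : i ∉ K) :
    P {ω | ∀ k ∈ K, M.NonAdj φ i k ω} = ENNReal.ofReal ((1 - connProb d φ) ^ K.card) := by
  have h := M.measure_forall_nonAdj hφ (Finset.disjoint_singleton_left.2 hi)
  simpa only [Finset.mem_singleton, forall_eq, Finset.prod_singleton,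
    hφ.lintegral_one_sub_torusDist, lintegral_const, measure_univ, mul_one,
    ← ENNReal.ofReal_pow (sub_nonneg.2 (hφ.connProb_le_one d))] using h

lemma measure_torusDist_pt_le {i j : ℕ} (hij : i ≠ j) (s : ℝ) :
    P {ω | torusDist (M.pt i ω) (M.pt j ω) ≤ s} ≤
      volume (Metric.closedBall (0 : EuclideanSpace ℝ (Fin d)) s) := by
  have h_meas : MeasurableSet {q : EuclideanSpace ℝ (Fin d) × EuclideanSpace ℝ (Fin d) |
      torusDist q.1 q.2 ≤ s} :=
    measurableSet_le (measurable_torusDist measurable_fst measurable_snd) measurable_const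
  calc
    P {ω | torusDist (M.pt i ω) (M.pt j ω) ≤ s}
    _ = ∫⁻ ω, P {ω' | torusDist (M.pt i ω) (M.pt j ω') ≤ s} ∂P :=
      measure_prodMk_mem_of_indepFun (M.iIndepFun_pt.indepFun hij) (M.measurable_pt i)
        (M.measurable_pt j) h_meas
    _ = ∫⁻ ω, volume.restrict (cube d) {y | torusDist (M.pt i ω) y ≤ s} ∂P := by
      refine lintegral_congr fun ω => ?_
      have hx : Measurable (torusDist (M.pt i ω)) :=
        measurable_torusDist measurable_const measurable_id
      rw [← M.map_pt j]
      exact (Measure.map_apply (M.measurable_pt j) (hx measurableSet_Iic)).symm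
    _ ≤ ∫⁻ _, volume (Metric.closedBall (0 : EuclideanSpace ℝ (Fin d)) s) ∂P :=
      lintegral_mono fun ω => restrict_cube_torusDist_le _ s
    _ = _ := by rw [lintegral_const, measure_univ, mul_one]

lemma measureReal_forall_nonAdj_pair_le (hφ : IsConnFun φ) {i j : ℕ} (hij : i ≠ j)
    {K : Finset ℕ} (hi : i ∉ K) (hj : j ∉ K) (s : ℝ) :
    P.real {ω | ∀ k ∈ K, M.NonAdj φ i k ω ∧ M.NonAdj φ j k ω} ≤
      (1 - connProb d φ) ^ K.card *
          volume.real (Metric.closedBall (0 : EuclideanSpace ℝ (Fin d)) s) +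
        ((1 - connProb d φ) ^ 2 + 2 * connProb d φ * φ (s / 2)) ^ K.card := by
  have hp := hφ.connProb_nonneg d
  have hq := sub_nonneg.2 (hφ.connProb_le_one d)
  have hφs := hφ.nonneg (s / 2)
  set b := (1 - connProb d φ) ^ 2 + 2 * connProb d φ * φ (s / 2)
  have hb : 0 ≤ b := by positivity
  set near : Set Ω := {ω | torusDist (M.pt i ω) (M.pt j ω) ≤ s}
  have h_near : MeasurableSet near :=
    measurableSet_le (measurable_torusDist (M.measurable_pt i) (M.measurable_pt j))
      measurable_const
  have h_le (ω : Ω) : (∫⁻ y in cube d, ENNReal.ofReal (1 - φ (torusDist (M.pt i ω) y)) *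
        ENNReal.ofReal (1 - φ (torusDist (M.pt j ω) y))) ^ K.card ≤
      near.indicator (fun _ => ENNReal.ofReal ((1 - connProb d φ) ^ K.card)) ω +
        ENNReal.ofReal (b ^ K.card) := by
    rw [ENNReal.ofReal_pow hq, ENNReal.ofReal_pow hb]
    by_cases hω : ω ∈ near
    · rw [indicator_of_mem hω]
      exact le_add_right (pow_le_pow_left' (hφ.lintegral_one_sub_mul_one_sub_le _ _) _)
    · exact le_add_left (pow_le_pow_left'
        (hφ.lintegral_one_sub_mul_one_sub_le_of_le_torusDist (not_le.1 hω).le) _)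
  have h := M.measure_forall_nonAdj hφ (T := {i, j}) (K := K) (by simp [hi, hj])
  simp only [Finset.mem_insert, Finset.mem_singleton, forall_eq_or_imp, forall_eq,
    Finset.prod_pair hij, ← forall_and] at h
  refine ENNReal.toReal_le_of_le_ofReal (by positivity) ?_
  rw [h, ENNReal.ofReal_add (by positivity) (by positivity), ENNReal.ofReal_mul (by positivity),
    ofReal_measureReal measure_closedBall_lt_top.ne]
  refine (lintegral_mono h_le).trans ?_
  rw [lintegral_add_right _ measurable_const, lintegral_indicator_const h_near, lintegral_const,
    measure_univ, mul_one]
  gcongr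
  exact M.measure_torusDist_pt_le hij s

end Measure

end Model

section Estimates

lemma inv_one_sub_pow_le_exp {p : ℝ} (hp : p < 1) (m : ℕ) :
    ((1 - p) ^ m)⁻¹ ≤ Real.exp (m * (p / (1 - p))) := by
  have h : 0 < 1 - p := sub_pos.2 hp
  have h_inv : (1 - p)⁻¹ = p / (1 - p) + 1 := by
    field_simp
    ring
  rw [← inv_pow, Real.exp_nat_mul]
  refine pow_le_pow_left₀ (inv_nonneg.2 h.le) ?_ m
  rw [h_inv]
  exact Real.add_one_le_exp _

lemma one_sub_sq_add_pow_div_le_exp {p a : ℝ} (hp₀ : 0 ≤ p) (hp : p ≤ 1 / 2) (ha : 0 ≤ a)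
    (k : ℕ) :
    ((1 - p) ^ 2 + 2 * p * a) ^ k / (1 - p) ^ (2 * (k + 1)) ≤
      Real.exp (4 * p + 8 * k * (p * a)) := by
  have hpa : 0 ≤ p * a := mul_nonneg hp₀ ha
  have hq : 1 / 2 ≤ 1 - p := by linarith
  have hq_pos : 0 < 1 - p := by linarith
  have h_base : (1 - p) ^ 2 + 2 * p * a ≤ (1 - p) ^ 2 * Real.exp (8 * (p * a)) := by
    have h_sq : 1 / 4 ≤ (1 - p) ^ 2 := by nlinarith
    nlinarith [Real.add_one_le_exp (8 * (p * a))]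
  have h_inv : ((1 - p) ^ 2)⁻¹ ≤ Real.exp (4 * p) := by
    refine (inv_one_sub_pow_le_exp (by linarith) 2).trans (Real.exp_le_exp.2 ?_)
    have : p / (1 - p) ≤ 2 * p := by
      rw [div_le_iff₀ hq_pos]
      nlinarith
    push_cast
    linarith
  calc
    ((1 - p) ^ 2 + 2 * p * a) ^ k / (1 - p) ^ (2 * (k + 1))
    _ ≤ ((1 - p) ^ 2 * Real.exp (8 * (p * a))) ^ k / (1 - p) ^ (2 * (k + 1)) := by gcongr
    _ = ((1 - p) ^ 2)⁻¹ * Real.exp (8 * (p * a)) ^ k := by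
      rw [mul_pow, ← pow_mul, mul_add, pow_add]
      field_simp
    _ ≤ Real.exp (4 * p) * Real.exp (8 * (p * a)) ^ k := by gcongr
    _ = Real.exp (4 * p + 8 * k * (p * a)) := by
      rw [← Real.exp_nat_mul, ← Real.exp_add]
      ring_nf

/-- The quotients that occur when the second moment method is applied to `n` events of probability
`(1 - p) ^ (k + 1)`. -/
lemma second_moment_quotient_le_exp {p a v n : ℝ} (hp₀ : 0 ≤ p) (hp : p ≤ 1 / 2) (ha : 0 ≤ a)
    (hv : 0 ≤ v) (hn : 0 ≤ n) (k : ℕ) :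
    1 / (n * (1 - p) ^ (k + 1)) +
        ((1 - p) ^ k * v + ((1 - p) ^ 2 + 2 * p * a) ^ k) / ((1 - p) ^ (k + 1)) ^ 2 ≤
      (1 / n + v) * Real.exp ((k + 2 : ℕ) * (p / (1 - p))) +
        Real.exp (4 * p + 8 * (k + 2 : ℕ) * (p * a)) := by
  have hq : 0 < 1 - p := by linarith
  have h_single : 1 / (n * (1 - p) ^ (k + 1)) ≤ 1 / n * ((1 - p) ^ (k + 2))⁻¹ := by
    rw [one_div, mul_inv, one_div]
    gcongr ?_ * (?_)⁻¹
    exact pow_le_pow_of_le_one hq.le (by linarith) (by omega)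
  have h_near : (1 - p) ^ k * v / ((1 - p) ^ (k + 1)) ^ 2 = v * ((1 - p) ^ (k + 2))⁻¹ := by
    field_simp
    ring
  have h_far : ((1 - p) ^ 2 + 2 * p * a) ^ k / ((1 - p) ^ (k + 1)) ^ 2 ≤
      Real.exp (4 * p + 8 * (k + 2 : ℕ) * (p * a)) := by
    rw [← pow_mul']
    refine (one_sub_sq_add_pow_div_le_exp hp₀ hp ha k).trans (Real.exp_le_exp.2 ?_)
    gcongr
    omega
  have h_inv := mul_le_mul_of_nonneg_left
    (inv_one_sub_pow_le_exp (show p < 1 by linarith) (k + 2)) (show 0 ≤ 1 / n + v by positivity)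
  rw [add_div, h_near]
  linarith

lemma le_add_two_mul_of_le_add_exp_sub_one {q a y : ℝ} (hq : q ≤ 1) (ha : 0 ≤ a) (hy : 0 ≤ y)
    (h : q ≤ a + (Real.exp y - 1)) : q ≤ a + 2 * y := by
  rcases le_total y 1 with hy₁ | hy₁
  · have h_exp := (le_abs_self _).trans
      (Real.abs_exp_sub_one_le (x := y) (by rwa [abs_of_nonneg hy]))
    rw [abs_of_nonneg hy] at h_exp
    linarith
  · linarith

lemma exists_volume_real_closedBall_eq (hd : d ≠ 0) {u : ℝ} (hu : 0 ≤ u) :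
    ∃ t : ℝ, 0 ≤ t ∧ volume.real (Metric.closedBall (0 : EuclideanSpace ℝ (Fin d)) t) = u := by
  have h_ball : 0 < volume.real (Metric.ball (0 : EuclideanSpace ℝ (Fin d)) 1) :=
    ENNReal.toReal_pos (Metric.measure_ball_pos _ _ one_pos).ne' measure_ball_lt_top.ne
  refine ⟨(u / volume.real (Metric.ball (0 : EuclideanSpace ℝ (Fin d)) 1)) ^ (d : ℝ)⁻¹,
    by positivity, ?_⟩
  rw [Measure.addHaar_real_closedBall _ _ (by positivity), finrank_euclideanSpace_fin,
    Real.rpow_inv_natCast_pow (by positivity) hd, div_mul_cancel₀ _ h_ball.ne']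

end Estimates

namespace Model

section Isolation

variable {φ : ℝ → ℝ} (M : Model d P)

/-- The event that vertex `i + 1` has no neighbour among the first `m` vertices when edges are drawn
according to the connection function `φ`. -/
def isolatedIn (φ : ℝ → ℝ) (m i : ℕ) : Set Ω :=
  {ω | ∀ k ∈ (Finset.range m).erase i, M.NonAdj φ i k ω}

lemma measurableSet_isolatedIn (hφ : IsConnFun φ) (m i : ℕ) :
    MeasurableSet (M.isolatedIn φ m i) := by
  simp only [isolatedIn, Set.ofPred_forall]
  exact Finset.measurableSet_biInter _ fun k _ => M.measurableSet_nonAdj hφ i k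

variable [IsProbabilityMeasure P]

lemma measureReal_isolatedIn (hφ : IsConnFun φ) (m i : ℕ) :
    P.real (M.isolatedIn φ m i) = (1 - connProb d φ) ^ ((Finset.range m).erase i).card := by
  rw [Measure.real, isolatedIn, M.measure_forall_nonAdj_of_notMem hφ (Finset.notMem_erase i _),
    ENNReal.toReal_ofReal (pow_nonneg (sub_nonneg.2 (hφ.connProb_le_one d)) _)]

lemma measureReal_isolatedIn_of_lt (hφ : IsConnFun φ) {i k : ℕ} (hi : i < k + 1) :
    P.real (M.isolatedIn φ (k + 1) i) = (1 - connProb d φ) ^ k := by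
  rw [M.measureReal_isolatedIn hφ, Finset.card_erase_of_mem (Finset.mem_range.2 hi),
    Finset.card_range, Nat.add_sub_cancel]

lemma measureReal_isolatedIn_le_exp (hφ : IsConnFun φ) (m i : ℕ) :
    P.real (M.isolatedIn φ m i) ≤ Real.exp (-(connProb d φ * (m - 1))) := by
  have h_card : (m : ℝ) - 1 ≤ ((Finset.range m).erase i).card := by
    have h := Finset.pred_card_le_card_erase (s := Finset.range m) (a := i)
    rw [Finset.card_range, Nat.sub_le_iff_le_add] at h
    rw [sub_le_iff_le_add]
    exact_mod_cast h
  calc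
    P.real (M.isolatedIn φ m i)
    _ = (1 - connProb d φ) ^ ((Finset.range m).erase i).card := M.measureReal_isolatedIn hφ m i
    _ ≤ Real.exp (-connProb d φ) ^ ((Finset.range m).erase i).card :=
      pow_le_pow_left₀ (sub_nonneg.2 (hφ.connProb_le_one d)) (Real.one_sub_le_exp_neg _) _
    _ = Real.exp (-(connProb d φ * ((Finset.range m).erase i).card)) := by
      rw [← Real.exp_nat_mul, mul_neg, mul_comm]
    _ ≤ Real.exp (-(connProb d φ * (m - 1))) :=
      Real.exp_le_exp.2 (neg_le_neg (mul_le_mul_of_nonneg_left h_card (hφ.connProb_nonneg d)))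

theorem measureReal_exists_mem_isolatedIn_le (hφ : IsConnFun φ) (m₁ m₂ : ℕ) :
    P.real {ω | ∃ i < m₂, ω ∈ M.isolatedIn φ m₁ i} ≤
      m₂ * Real.exp (-(connProb d φ * (m₁ - 1))) := by
  have h_union : {ω | ∃ i < m₂, ω ∈ M.isolatedIn φ m₁ i} =
      ⋃ i ∈ Finset.range m₂, M.isolatedIn φ m₁ i := by
    ext ω
    simp
  rw [h_union]
  refine (measureReal_biUnion_finset_le _ _).trans
    ((Finset.sum_le_sum fun i _ => M.measureReal_isolatedIn_le_exp hφ m₁ i).trans_eq ?_)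
  rw [Finset.sum_const, Finset.card_range, nsmul_eq_mul]

lemma measureReal_isolatedIn_inter_le (hφ : IsConnFun φ) {i j k : ℕ} (hi : i < k + 2)
    (hj : j < k + 2) (hij : i ≠ j) (s : ℝ) :
    P.real (M.isolatedIn φ (k + 2) i ∩ M.isolatedIn φ (k + 2) j) ≤
      (1 - connProb d φ) ^ k * volume.real (Metric.closedBall (0 : EuclideanSpace ℝ (Fin d)) s) +
        ((1 - connProb d φ) ^ 2 + 2 * connProb d φ * φ (s / 2)) ^ k := by
  have hj' : j ∈ (Finset.range (k + 2)).erase i :=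
    Finset.mem_erase.2 ⟨hij.symm, Finset.mem_range.2 hj⟩
  have h_card : (((Finset.range (k + 2)).erase i).erase j).card = k := by
    rw [Finset.card_erase_of_mem hj', Finset.card_erase_of_mem (Finset.mem_range.2 hi),
      Finset.card_range, Nat.add_sub_assoc (by omega), Nat.add_sub_cancel]
  have h := M.measureReal_forall_nonAdj_pair_le hφ hij (by simp)
    (Finset.notMem_erase j ((Finset.range (k + 2)).erase i)) s
  rw [h_card] at h
  refine (measureReal_mono fun ω hω l hl => ?_).trans h
  obtain ⟨hlj, hli⟩ := Finset.mem_erase.1 hl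
  exact ⟨hω.1 l hli, hω.2 l (Finset.mem_erase.2 ⟨hlj, Finset.mem_of_mem_erase hli⟩)⟩

theorem measureReal_forall_notMem_isolatedIn_le (hφ : IsConnFun φ) (hp : connProb d φ ≤ 1 / 2)
    {m₁ m₂ : ℕ} (hm₁ : 0 < m₁) (hm : m₁ ≤ m₂) (hm₂ : 2 ≤ m₂) (s : ℝ) :
    P.real {ω | ∀ i < m₁, ω ∉ M.isolatedIn φ m₂ i} ≤
      (1 / m₁ + volume.real (Metric.closedBall (0 : EuclideanSpace ℝ (Fin d)) s)) *
          Real.exp (m₂ * (connProb d φ / (1 - connProb d φ))) +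
        (Real.exp (4 * connProb d φ + 8 * m₂ * (connProb d φ * φ (s / 2))) - 1) := by
  have hp₀ := hφ.connProb_nonneg d
  have hφs := hφ.nonneg (s / 2)
  have hq : 0 < 1 - connProb d φ := by linarith
  obtain ⟨k, rfl⟩ := Nat.exists_eq_add_of_le' hm₂
  have h_moments := measureReal_forall_notMem_le (s := Finset.range m₁)
    (Finset.nonempty_range_iff.2 hm₁.ne') (fun i _ => M.measurableSet_isolatedIn hφ _ i)
    (pow_pos hq (k + 1)) (by positivity)
    (fun i hi => M.measureReal_isolatedIn_of_lt hφ ((Finset.mem_range.1 hi).trans_le hm))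
    (fun i hi j hj hij => M.measureReal_isolatedIn_inter_le hφ
      ((Finset.mem_range.1 hi).trans_le hm) ((Finset.mem_range.1 hj).trans_le hm) hij s)
  simp only [Finset.mem_range, Finset.card_range] at h_moments
  have h_quotient := second_moment_quotient_le_exp hp₀ hp hφs
    (measureReal_nonneg (μ := volume)
      (s := Metric.closedBall (0 : EuclideanSpace ℝ (Fin d)) s)) m₁.cast_nonneg k
  linarith

/-- For `u = |B(0, t)|` Markov's inequality gives `φ t ≤ τ / u`, so every vertex at distance more
than `2 * t` contributes at most `m₂ * τ ^ 2 / u` to the correlation. -/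
theorem measureReal_forall_notMem_isolatedIn_le_of_integral_eq (hφ : IsConnFun φ) (hd : d ≠ 0)
    (h_int : Integrable fun x : EuclideanSpace ℝ (Fin d) => φ ‖x‖) {τ u : ℝ}
    (hτ : ∫ x : EuclideanSpace ℝ (Fin d), φ ‖x‖ = τ) (hτ_le : τ ≤ 1 / 2) (hu : 0 < u)
    {m₁ m₂ : ℕ} (hm₁ : 0 < m₁) (hm : m₁ ≤ m₂) (hm₂ : 2 ≤ m₂) :
    P.real {ω | ∀ i < m₁, ω ∉ M.isolatedIn φ m₂ i} ≤
      (1 / m₁ + 2 ^ d * u) * Real.exp (m₂ * (τ / (1 - τ))) + (8 * τ + 16 * m₂ * (τ ^ 2 / u)) := by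
  have hp₀ := hφ.connProb_nonneg d
  have hpτ : connProb d φ ≤ τ := hτ ▸ hφ.connProb_le_integral h_int
  have hτ₀ : 0 ≤ τ := hp₀.trans hpτ
  obtain ⟨t, ht, htu⟩ := exists_volume_real_closedBall_eq hd hu.le
  have h_markov : φ t ≤ τ / u := by
    rw [le_div_iff₀ hu, ← htu, ← hτ]
    exact hφ.mul_volume_closedBall_le_integral h_int t
  have h_vol :
      volume.real (Metric.closedBall (0 : EuclideanSpace ℝ (Fin d)) (2 * t)) = 2 ^ d * u := by
    rw [← htu, Measure.addHaar_real_closedBall _ _ (by positivity),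
      Measure.addHaar_real_closedBall _ _ ht, finrank_euclideanSpace_fin, mul_pow, mul_assoc]
  have h_bound := M.measureReal_forall_notMem_isolatedIn_le hφ (hpτ.trans hτ_le) hm₁ hm hm₂
    (2 * t)
  rw [h_vol, mul_div_cancel_left₀ t two_ne_zero] at h_bound
  have h_linear := le_add_two_mul_of_le_add_exp_sub_one measureReal_le_one (by positivity)
    (by have := hφ.nonneg t; positivity) h_bound
  have h_exponent : connProb d φ * φ t ≤ τ ^ 2 / u :=
    (mul_le_mul hpτ h_markov (hφ.nonneg t) hτ₀).trans_eq (by ring)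
  have h_ratio : connProb d φ / (1 - connProb d φ) ≤ τ / (1 - τ) :=
    div_le_div₀ hτ₀ hpτ (by linarith) (by linarith)
  refine h_linear.trans (add_le_add (by gcongr) ?_)
  have := mul_le_mul_of_nonneg_left h_exponent (show (0 : ℝ) ≤ 16 * m₂ by positivity)
  linarith

end Isolation

section Profile

variable (M : Model d P) {r s : ℝ}

/-- The connection function `t ↦ g (t / r)` of `G_n(r)`, continued to the negative reals by its
value at `0` because `g` is only specified on `[0, ∞)`. -/
def profile (r t : ℝ) : ℝ := M.g (max t 0 / r)

lemma profile_of_nonneg (r : ℝ) {t : ℝ} (ht : 0 ≤ t) : M.profile r t = M.g (t / r) := by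
  rw [profile, max_eq_left ht]

lemma isConnFun_profile (hr : 0 < r) : IsConnFun (M.profile r) where
  antitone t t' htt' := by
    refine M.g_antitone ?_ ?_ (by gcongr) <;> exact div_nonneg (le_max_right _ _) hr.le
  mem_Icc _ := M.g_mem _ (div_nonneg (le_max_right _ _) hr.le)

lemma profile_mono (hr : 0 < r) (hrs : r ≤ s) : M.profile r ≤ M.profile s := fun t => by
  have ht : 0 ≤ max t 0 := le_max_right _ _
  exact M.g_antitone (div_nonneg ht (hr.trans_le hrs).le) (div_nonneg ht hr.le) (by gcongr)

lemma profile_norm (hr : 0 < r) (x : EuclideanSpace ℝ (Fin d)) :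
    M.profile r ‖x‖ = M.g ‖r⁻¹ • x‖ := by
  rw [M.profile_of_nonneg r (norm_nonneg x), norm_smul, norm_inv, Real.norm_of_nonneg hr.le,
    inv_mul_eq_div]

lemma integrable_profile_norm (hr : 0 < r) :
    Integrable fun x : EuclideanSpace ℝ (Fin d) => M.profile r ‖x‖ := by
  simp only [M.profile_norm hr]
  exact M.g_integrable.comp_smul (inv_ne_zero hr.ne')

lemma integral_profile_norm (hr : 0 < r) :
    ∫ x : EuclideanSpace ℝ (Fin d), M.profile r ‖x‖ = M.α * r ^ d := by
  simp only [M.profile_norm hr]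
  rw [Measure.integral_comp_inv_smul_of_nonneg volume (fun x => M.g ‖x‖) hr.le,
    finrank_euclideanSpace_fin, ← M.α_def, smul_eq_mul, mul_comm]

lemma eventually_mul_le_connProb_profile {θ : ℝ} (hθ : θ < 1) :
    ∀ᶠ r in nhdsWithin 0 (Ioi 0), θ * (M.α * r ^ d) ≤ connProb d (M.profile r) := by
  have h_lim := tendsto_setIntegral_comp_inv_smul M.g_integrable (cube_mem_nhds_zero d)
    (measurableSet_cube d)
  rw [← M.α_def, finrank_euclideanSpace_fin] at h_lim
  filter_upwards [h_lim.eventually_const_le (mul_lt_of_lt_one_left M.α_pos hθ),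
    self_mem_nhdsWithin] with r h_le (hr : 0 < r)
  simp only [connProb, M.profile_norm hr]
  rw [smul_eq_mul, inv_mul_eq_div, le_div_iff₀ (by positivity)] at h_le
  rwa [← mul_assoc]

/-- The scale `r` at which the mean `α * r ^ d` of the connection function of `G_n(r)` is `τ`. -/
def radius (τ : ℝ) : ℝ := (τ / M.α) ^ (d : ℝ)⁻¹

lemma radius_pos {τ : ℝ} (hτ : 0 < τ) : 0 < M.radius τ :=
  Real.rpow_pos_of_pos (div_pos hτ M.α_pos) _

lemma α_mul_radius_pow (hd : d ≠ 0) {τ : ℝ} (hτ : 0 ≤ τ) : M.α * M.radius τ ^ d = τ := by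
  rw [radius, Real.rpow_inv_natCast_pow (div_nonneg hτ M.α_pos.le) hd,
    mul_div_cancel₀ _ M.α_pos.ne']

lemma tendsto_radius (hd : d ≠ 0) :
    Tendsto M.radius (nhdsWithin 0 (Ioi 0)) (nhdsWithin 0 (Ioi 0)) := by
  refine tendsto_nhdsWithin_iff.2
    ⟨?_, eventually_mem_nhdsWithin.mono fun τ hτ => M.radius_pos hτ⟩
  have h_div : Tendsto (fun τ : ℝ => τ / M.α) (nhdsWithin 0 (Ioi 0)) (nhds (0 / M.α)) :=
    (tendsto_id.div_const M.α).mono_left nhdsWithin_le_nhds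
  have h := h_div.rpow_const (p := (d : ℝ)⁻¹) (Or.inr (by positivity))
  rwa [zero_div, Real.zero_rpow (by positivity)] at h

end Profile

section CriticalRadius

variable (M : Model d P) {n m₁ m₂ : ℕ} {r : ℝ} {ω : Ω}

lemma isolatedIn_anti {φ ψ : ℝ → ℝ} (hφψ : φ ≤ ψ) (hm : m₁ ≤ m₂) (i : ℕ) :
    M.isolatedIn ψ m₂ i ⊆ M.isolatedIn φ m₁ i := fun _ hω k hk =>
  (hφψ _).trans_lt (hω k (Finset.erase_subset_erase i (Finset.range_subset_range.2 hm) hk))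

lemma adj_succ_succ_iff (i j : ℕ) :
    adj M n r ω (i + 1) (j + 1) ↔
      i < M.N n ω ∧ j ∈ (Finset.range (M.N n ω)).erase i ∧ ¬ M.NonAdj (M.profile r) i j ω := by
  rw [adj, NonAdj, M.profile_of_nonneg r (torusDist_nonneg _ _), edgeVar, min_add_add_right,
    max_add_add_right, not_lt, Finset.mem_erase, Finset.mem_range, pt, pt]
  grind

lemma deg_succ_eq_zero_iff {i : ℕ} (hi : i < M.N n ω) :
    deg M n r ω (i + 1) = 0 ↔ ω ∈ M.isolatedIn (M.profile r) (M.N n ω) i := by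
  have h_finite : {j | adj M n r ω (i + 1) j}.Finite :=
    (finite_Iic (M.N n ω)).subset fun j hj => hj.2.2.2.2.1
  rw [deg, ncard_eq_zero h_finite, eq_empty_iff_forall_notMem]
  refine ⟨fun h k hk => ?_, fun h j hj => ?_⟩
  · by_contra h_adj
    exact h (k + 1) ((M.adj_succ_succ_iff i k).2 ⟨hi, hk, h_adj⟩)
  · obtain ⟨k, rfl⟩ := Nat.exists_eq_add_of_le' hj.2.2.1
    obtain ⟨-, hk, h_adj⟩ := (M.adj_succ_succ_iff i k).1 hj
    exact h_adj (h k hk)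

lemma isolatedCount_eq_zero_iff :
    isolatedCount M n r ω = 0 ↔
      ∀ i < M.N n ω, ω ∉ M.isolatedIn (M.profile r) (M.N n ω) i := by
  have h_finite : {i | 1 ≤ i ∧ i ≤ M.N n ω ∧ deg M n r ω i = 0}.Finite :=
    (finite_Iic (M.N n ω)).subset fun i hi => hi.2.1
  rw [isolatedCount, ncard_eq_zero h_finite, eq_empty_iff_forall_notMem]
  refine ⟨fun h i hi h_isolated => ?_, ?_⟩
  · exact h (i + 1) ⟨i.succ_pos, hi, (M.deg_succ_eq_zero_iff hi).2 h_isolated⟩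
  · rintro h j ⟨hj, hjN, h_deg⟩
    obtain ⟨i, rfl⟩ := Nat.exists_eq_add_of_le' hj
    exact h i hjN ((M.deg_succ_eq_zero_iff hjN).1 h_deg)

lemma isolatedCount_eq_zero_of_forall_notMem (hm₁ : m₁ ≤ M.N n ω)
    (hm₂ : M.N n ω ≤ m₂) (h : ∀ i < m₂, ω ∉ M.isolatedIn (M.profile r) m₁ i) :
    isolatedCount M n r ω = 0 :=
  M.isolatedCount_eq_zero_iff.2 fun i hi h_isolated =>
    h i (hi.trans_le hm₂) (M.isolatedIn_anti le_rfl hm₁ i h_isolated)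

/-- Since `sInf ∅ = 0`, an isolated vertex at radius `r` does not by itself give `r ≤ d_n`. -/
lemma critRadius_mem_Icc {R : ℝ} (hR : 0 < R) (hm₁ : m₁ ≤ M.N n ω) (hm₂ : M.N n ω ≤ m₂)
    (h_some : ∃ i < m₁, ω ∈ M.isolatedIn (M.profile r) m₂ i)
    (h_none : ∀ i < m₂, ω ∉ M.isolatedIn (M.profile R) m₁ i) :
    critRadius M n ω ∈ Icc r R := by
  have h_zero := M.isolatedCount_eq_zero_of_forall_notMem hm₁ hm₂ h_none
  refine ⟨le_csInf ⟨R, hR, h_zero⟩ fun s hs => ?_, csInf_le ⟨0, fun _ hs => hs.1.le⟩ ⟨hR, h_zero⟩⟩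
  by_contra! h_lt
  obtain ⟨i, hi, h_isolated⟩ := h_some
  exact M.isolatedCount_eq_zero_iff.1 hs.2 i (hi.trans_le hm₁)
    (M.isolatedIn_anti (M.profile_mono hs.1 h_lt.le) hm₂ i h_isolated)

end CriticalRadius

end Model

section Blocks

variable {ρ : ℝ}

/-- A lower bound for `N_n` when `ρ ^ k ≤ n < ρ ^ (k + 1)`. -/
def blockLower (ρ : ℝ) (k : ℕ) : ℕ := ⌈ρ ^ k / ρ⌉₊

/-- An upper bound for `N_n` when `ρ ^ k ≤ n < ρ ^ (k + 1)`. -/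
def blockUpper (ρ : ℝ) (k : ℕ) : ℕ := ⌊ρ ^ 2 * ρ ^ k⌋₊

/-- A value slightly above `log n / n` for `ρ ^ k ≤ n < ρ ^ (k + 1)`; at the corresponding radius no
vertex is isolated. -/
def upperScale (ρ : ℝ) (k : ℕ) : ℝ := ρ ^ 4 * Real.log ρ * k / ρ ^ k

/-- A value slightly below `log n / n` for `ρ ^ k ≤ n < ρ ^ (k + 1)`; at the corresponding radius
some vertex is isolated. -/
def lowerScale (ρ : ℝ) (k : ℕ) : ℝ := Real.log ρ / ρ ^ 5 * (k + 1) / ρ ^ k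

lemma le_blockLower (ρ : ℝ) (k : ℕ) : ρ ^ k / ρ ≤ blockLower ρ k := Nat.le_ceil _

lemma blockUpper_le (hρ : 0 ≤ ρ) (k : ℕ) : blockUpper ρ k ≤ ρ ^ 2 * ρ ^ k :=
  Nat.floor_le (by positivity)

lemma blockLower_pos (hρ : 0 < ρ) (k : ℕ) : 0 < blockLower ρ k := Nat.ceil_pos.2 (by positivity)

lemma eventually_div_sq_le_blockLower_sub_one (hρ : 1 < ρ) :
    ∀ᶠ k in atTop, ρ ^ k / ρ ^ 2 ≤ blockLower ρ k - 1 := by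
  filter_upwards [(tendsto_pow_atTop_atTop_of_one_lt hρ).eventually_ge_atTop (ρ ^ 2 / (ρ - 1))]
    with k hk
  refine le_trans ?_ (sub_le_sub_right (le_blockLower ρ k) 1)
  rw [div_le_iff₀ (sub_pos.2 hρ)] at hk
  have h_sub : ρ ^ k / ρ - ρ ^ k / ρ ^ 2 = ρ ^ k * (ρ - 1) / ρ ^ 2 := by
    have := (one_pos.trans hρ).ne'
    field_simp
  have h_one : 1 ≤ ρ ^ k * (ρ - 1) / ρ ^ 2 := (one_le_div (by positivity)).2 hk
  linarith

lemma eventually_blockLower_le_blockUpper (hρ : 1 < ρ) :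
    ∀ᶠ k in atTop, blockLower ρ k ≤ blockUpper ρ k := by
  filter_upwards [(tendsto_pow_atTop_atTop_of_one_lt hρ).eventually_ge_atTop (1 / (ρ - 1))]
    with k hk
  have h_pos : 0 < ρ ^ k := by positivity
  refine Nat.le_floor ((Nat.ceil_lt_add_one (by positivity)).le.trans ?_)
  rw [div_le_iff₀ (sub_pos.2 hρ)] at hk
  calc
    ρ ^ k / ρ + 1
    _ ≤ ρ ^ k + ρ ^ k * (ρ - 1) := add_le_add (div_le_self h_pos.le hρ.le) hk
    _ = ρ * ρ ^ k := by ring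
    _ ≤ ρ ^ 2 * ρ ^ k := by
      gcongr
      exact le_self_pow₀ hρ.le two_ne_zero

lemma eventually_two_le_blockUpper (hρ : 1 < ρ) : ∀ᶠ k in atTop, 2 ≤ blockUpper ρ k := by
  filter_upwards [(tendsto_pow_atTop_atTop_of_one_lt hρ).eventually_ge_atTop 2] with k hk
  exact Nat.le_floor (hk.trans (le_mul_of_one_le_left (by positivity) (one_le_pow₀ hρ.le)))

lemma tendsto_mul_add_div_pow (hρ : 1 < ρ) (a b : ℝ) :
    Tendsto (fun k : ℕ => a * (k + b) / ρ ^ k) atTop (nhds 0) := by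
  have h := ((tendsto_pow_const_div_const_pow_of_one_lt 1 hρ).const_mul a).add
    ((tendsto_pow_const_div_const_pow_of_one_lt 0 hρ).const_mul (a * b))
  simp only [mul_zero, add_zero] at h
  refine h.congr fun k => ?_
  ring

lemma upperScale_pos (hρ : 1 < ρ) {k : ℕ} (hk : 0 < k) : 0 < upperScale ρ k := by
  have h_log := Real.log_pos hρ
  unfold upperScale
  positivity

lemma lowerScale_pos (hρ : 1 < ρ) (k : ℕ) : 0 < lowerScale ρ k := by
  have h_log := Real.log_pos hρ
  unfold lowerScale
  positivity

lemma tendsto_upperScale (hρ : 1 < ρ) :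
    Tendsto (upperScale ρ) atTop (nhdsWithin 0 (Ioi 0)) := by
  refine tendsto_nhdsWithin_iff.2
    ⟨?_, (eventually_gt_atTop 0).mono fun k hk => upperScale_pos hρ hk⟩
  refine (tendsto_mul_add_div_pow hρ (ρ ^ 4 * Real.log ρ) 0).congr fun k => ?_
  rw [add_zero, upperScale]

lemma tendsto_lowerScale (hρ : 1 < ρ) : Tendsto (lowerScale ρ) atTop (nhds 0) :=
  tendsto_mul_add_div_pow hρ (Real.log ρ / ρ ^ 5) 1

lemma mem_Icc_blockLower_blockUpper (hρ : 1 < ρ) {k n N : ℕ} (hkn : ρ ^ k ≤ n)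
    (hnk : n < ρ ^ (k + 1)) (hN : (N : ℝ) ∈ Ioo (ρ⁻¹ * n) (ρ * n)) :
    N ∈ Icc (blockLower ρ k) (blockUpper ρ k) := by
  refine ⟨Nat.ceil_le.2 (le_trans ?_ hN.1.le), Nat.le_floor (hN.2.le.trans ?_)⟩
  · rw [div_eq_inv_mul]
    gcongr
  · rw [sq, mul_assoc, ← pow_succ']
    gcongr

lemma mul_upperScale_le_log (hρ : 1 < ρ) {k n : ℕ} (hkn : ρ ^ k ≤ n) (hnk : n < ρ ^ (k + 1)) :
    n * upperScale ρ k ≤ ρ ^ 5 * Real.log n := by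
  have h_log := Real.log_pos hρ
  have h_log_n : k * Real.log ρ ≤ Real.log n := by
    rw [← Real.log_pow]
    exact Real.log_le_log (by positivity) hkn
  calc
    n * upperScale ρ k
    _ ≤ ρ ^ (k + 1) * (ρ ^ 4 * Real.log ρ * k / ρ ^ k) := by
      unfold upperScale
      gcongr
    _ = ρ ^ 5 * (k * Real.log ρ) := by
      field_simp
      ring
    _ ≤ ρ ^ 5 * Real.log n := by gcongr

lemma log_le_mul_lowerScale (hρ : 1 < ρ) {k n : ℕ} (hkn : ρ ^ k ≤ n) (hnk : n < ρ ^ (k + 1)) :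
    (ρ ^ 5)⁻¹ * Real.log n ≤ n * lowerScale ρ k := by
  have h_log := Real.log_pos hρ
  have h_log_n : Real.log n ≤ (k + 1) * Real.log ρ := by
    have h := Real.log_le_log ((pow_pos (one_pos.trans hρ) k).trans_le hkn) hnk.le
    rw [Real.log_pow] at h
    exact_mod_cast h
  calc
    (ρ ^ 5)⁻¹ * Real.log n
    _ ≤ (ρ ^ 5)⁻¹ * ((k + 1) * Real.log ρ) := by gcongr
    _ = ρ ^ k * (Real.log ρ / ρ ^ 5 * (k + 1) / ρ ^ k) := by field_simp
    _ ≤ n * lowerScale ρ k := by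
      unfold lowerScale
      gcongr

lemma eventually_exists_pow_le_lt_pow_succ (hρ : 1 < ρ) {p : ℕ → Prop} (hp : ∀ᶠ k in atTop, p k) :
    ∀ᶠ n : ℕ in atTop, ∃ k, p k ∧ ρ ^ k ≤ n ∧ n < ρ ^ (k + 1) := by
  obtain ⟨k₀, hk₀⟩ := eventually_atTop.1 hp
  filter_upwards [tendsto_natCast_atTop_atTop.eventually_ge_atTop (ρ ^ k₀)] with n hn
  obtain ⟨k, hkn, hnk⟩ := exists_nat_pow_near ((one_le_pow₀ hρ.le).trans hn) hρ
  have h_lt : k₀ < k + 1 := (pow_lt_pow_iff_right₀ hρ).1 (hn.trans_lt hnk)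
  exact ⟨k, hk₀ k (Nat.lt_succ_iff.1 h_lt), hkn, hnk⟩

/-- The geometric rate `exp (-(1 - ρ⁻²) * log ρ / 2)` at which the failure probabilities of the
second moment method decay along the blocks. -/
def blockRate (ρ : ℝ) : ℝ := Real.exp (-((1 - (ρ ^ 2)⁻¹) * Real.log ρ / 2))

lemma blockRate_pos (ρ : ℝ) : 0 < blockRate ρ := Real.exp_pos _

lemma blockRate_lt_one (hρ : 1 < ρ) : blockRate ρ < 1 := by
  have h_inv : (ρ ^ 2)⁻¹ < 1 := inv_lt_one_of_one_lt₀ (one_lt_pow₀ hρ two_ne_zero)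
  have h_mul := mul_pos (sub_pos.2 h_inv) (Real.log_pos hρ)
  exact Real.exp_lt_one_iff.2 (by linarith)

lemma mul_blockRate_sq (hρ : 0 < ρ) : ρ * blockRate ρ ^ 2 = Real.exp ((ρ ^ 2)⁻¹ * Real.log ρ) := by
  nth_rw 1 [← Real.exp_log hρ]
  rw [blockRate, ← Real.exp_nat_mul, ← Real.exp_add]
  congr 1
  push_cast
  ring

lemma inv_le_blockRate (hρ : 1 < ρ) : ρ⁻¹ ≤ blockRate ρ := by
  have h_one : 1 ≤ ρ * blockRate ρ ^ 2 := by
    rw [mul_blockRate_sq (one_pos.trans hρ)]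
    exact Real.one_le_exp (mul_nonneg (by positivity) (Real.log_nonneg hρ.le))
  have h_sq : blockRate ρ ^ 2 ≤ blockRate ρ :=
    pow_le_of_le_one (blockRate_pos ρ).le (blockRate_lt_one hρ).le two_ne_zero
  rw [inv_le_iff_one_le_mul₀ (one_pos.trans hρ), mul_comm]
  exact h_one.trans (by gcongr)

lemma exp_blockUpper_mul_lowerScale_le (hρ : 1 < ρ) {k : ℕ} (hk : lowerScale ρ k ≤ 1 - ρ⁻¹) :
    Real.exp (blockUpper ρ k * (lowerScale ρ k / (1 - lowerScale ρ k))) ≤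
      (ρ * blockRate ρ ^ 2) ^ (k + 1) := by
  have h_pos : 0 < ρ := one_pos.trans hρ
  have h_scale := lowerScale_pos hρ k
  rw [mul_blockRate_sq h_pos, ← Real.exp_nat_mul]
  refine Real.exp_le_exp.2 ?_
  have h_inv : ρ⁻¹ ≤ 1 - lowerScale ρ k := by linarith
  calc
    blockUpper ρ k * (lowerScale ρ k / (1 - lowerScale ρ k))
    _ ≤ ρ ^ 2 * ρ ^ k * (lowerScale ρ k / ρ⁻¹) := by
      refine mul_le_mul (blockUpper_le h_pos.le k) (by gcongr) ?_ (by positivity)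
      exact div_nonneg h_scale.le ((inv_nonneg.2 h_pos.le).trans h_inv)
    _ = (k + 1 : ℕ) * ((ρ ^ 2)⁻¹ * Real.log ρ) := by
      unfold lowerScale
      push_cast
      field_simp

lemma one_div_blockLower_mul_le (hρ : 1 < ρ) (k : ℕ) :
    1 / blockLower ρ k * (ρ * blockRate ρ ^ 2) ^ (k + 1) ≤ ρ ^ 2 * ((k + 1) * blockRate ρ ^ k) := by
  have h_rate := blockRate_pos ρ
  have h_rate_one := (blockRate_lt_one hρ).le
  calc
    1 / blockLower ρ k * (ρ * blockRate ρ ^ 2) ^ (k + 1)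
    _ ≤ 1 / (ρ ^ k / ρ) * (ρ * blockRate ρ ^ 2) ^ (k + 1) := by
      gcongr
      exact le_blockLower ρ k
    _ = ρ ^ 2 * (blockRate ρ ^ (k + 2) * blockRate ρ ^ k) := by
      field_simp
      ring
    _ ≤ ρ ^ 2 * ((k + 1) * blockRate ρ ^ k) := by
      gcongr
      exact (pow_le_one₀ h_rate.le h_rate_one).trans (le_add_of_nonneg_left k.cast_nonneg)

lemma lowerScale_div_mul_le (hρ : 1 < ρ) (k : ℕ) :
    lowerScale ρ k / blockRate ρ ^ k * (ρ * blockRate ρ ^ 2) ^ (k + 1) ≤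
      Real.log ρ * ((k + 1) * blockRate ρ ^ k) := by
  have h_rate := blockRate_pos ρ
  have h_log := Real.log_pos hρ
  calc
    lowerScale ρ k / blockRate ρ ^ k * (ρ * blockRate ρ ^ 2) ^ (k + 1)
    _ = Real.log ρ * ((k + 1) * blockRate ρ ^ k) * (blockRate ρ ^ 2 / ρ ^ 4) := by
      unfold lowerScale
      field_simp
      ring
    _ ≤ Real.log ρ * ((k + 1) * blockRate ρ ^ k) := by
      refine mul_le_of_le_one_right (by positivity) ((div_le_one (by positivity)).2 ?_)
      exact (pow_le_one₀ h_rate.le (blockRate_lt_one hρ).le).trans (one_le_pow₀ hρ.le)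

lemma lowerScale_le (hρ : 1 < ρ) (k : ℕ) :
    lowerScale ρ k ≤ Real.log ρ * ((k + 1) * blockRate ρ ^ k) := by
  have h_log := Real.log_pos hρ
  calc
    lowerScale ρ k
    _ = Real.log ρ / ρ ^ 5 * (k + 1) * ρ⁻¹ ^ k := by rw [lowerScale, inv_pow, div_eq_mul_inv]
    _ ≤ Real.log ρ * (k + 1) * blockRate ρ ^ k := by
      gcongr
      · exact div_le_self h_log.le (one_le_pow₀ hρ.le)
      · exact inv_le_blockRate hρ
    _ = Real.log ρ * ((k + 1) * blockRate ρ ^ k) := mul_assoc _ _ _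

lemma blockUpper_mul_lowerScale_le (hρ : 1 < ρ) (k : ℕ) :
    blockUpper ρ k * lowerScale ρ k ≤ Real.log ρ * (k + 1) := by
  have h_pos : 0 < ρ := one_pos.trans hρ
  have h_log := Real.log_pos hρ
  calc
    blockUpper ρ k * lowerScale ρ k
    _ ≤ ρ ^ 2 * ρ ^ k * lowerScale ρ k :=
      mul_le_mul_of_nonneg_right (blockUpper_le h_pos.le k) (lowerScale_pos hρ k).le
    _ = Real.log ρ * (k + 1) / ρ ^ 3 := by
      unfold lowerScale
      field_simp
    _ ≤ Real.log ρ * (k + 1) := div_le_self (by positivity) (one_le_pow₀ hρ.le)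

/-- The second moment bound with near-diagonal volume `u = τ / blockRate ρ ^ k`, which balances
`u * exp (m₂ * τ)` against `m₂ * τ ^ 2 / u`. -/
lemma second_moment_bound_le (hρ : 1 < ρ) (d : ℕ) {k : ℕ} (hk : lowerScale ρ k ≤ 1 - ρ⁻¹) :
    (1 / blockLower ρ k + 2 ^ d * (lowerScale ρ k / blockRate ρ ^ k)) *
          Real.exp (blockUpper ρ k * (lowerScale ρ k / (1 - lowerScale ρ k))) +
        (8 * lowerScale ρ k +
          16 * blockUpper ρ k * (lowerScale ρ k ^ 2 / (lowerScale ρ k / blockRate ρ ^ k))) ≤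
      (ρ ^ 2 + (2 ^ d + 24) * Real.log ρ) * ((k + 1) * blockRate ρ ^ k) := by
  have h_rate := blockRate_pos ρ
  have h_scale := lowerScale_pos hρ k
  have h_exp := mul_le_mul_of_nonneg_left (exp_blockUpper_mul_lowerScale_le hρ hk)
    (show 0 ≤ 1 / blockLower ρ k + 2 ^ d * (lowerScale ρ k / blockRate ρ ^ k) by positivity)
  have h_near := mul_le_mul_of_nonneg_left (lowerScale_div_mul_le hρ k)
    (show (0 : ℝ) ≤ 2 ^ d by positivity)
  have h_far := mul_le_mul_of_nonneg_right (blockUpper_mul_lowerScale_le hρ k)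
    (pow_pos h_rate k).le
  have h_quotient : lowerScale ρ k ^ 2 / (lowerScale ρ k / blockRate ρ ^ k) =
      lowerScale ρ k * blockRate ρ ^ k := by
    field_simp
  rw [h_quotient]
  linarith [one_div_blockLower_mul_le hρ k, lowerScale_le hρ k]

lemma summable_add_one_mul_pow {η : ℝ} (hη₀ : 0 ≤ η) (hη : η < 1) :
    Summable fun k : ℕ => ((k : ℝ) + 1) * η ^ k := by
  have h_norm : ‖η‖ < 1 := by rwa [Real.norm_of_nonneg hη₀]
  simpa only [pow_one, pow_zero, ← add_mul] using
    (summable_pow_mul_geometric_of_norm_lt_one 1 h_norm).add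
      (summable_pow_mul_geometric_of_norm_lt_one 0 h_norm)

end Blocks

namespace Model

variable (M : Model d P) {ρ : ℝ}

lemma hasLaw_N (n : ℕ) : HasLaw (M.N n) (poissonMeasure n) P where
  aemeasurable := (M.N_meas n).aemeasurable
  map_eq := Measure.ext_of_singleton fun k => by
    rw [Measure.map_apply (M.N_meas n) (measurableSet_singleton k), poissonMeasure_singleton]
    exact M.N_poisson n k

lemma eventually_mul_log_mul_le_connProb_profile_mul (hd : d ≠ 0) (hρ : 1 < ρ) :
    ∀ᶠ k : ℕ in atTop, ρ * Real.log ρ * k ≤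
      connProb d (M.profile (M.radius (upperScale ρ k))) * (blockLower ρ k - 1) := by
  have h_connProb := ((M.tendsto_radius hd).comp (tendsto_upperScale hρ)).eventually
    (M.eventually_mul_le_connProb_profile (inv_lt_one_of_one_lt₀ hρ))
  filter_upwards [h_connProb, eventually_gt_atTop 0, eventually_div_sq_le_blockLower_sub_one hρ]
    with k h_connProb hk h_lower
  have h_scale := upperScale_pos hρ hk
  rw [Function.comp_apply, M.α_mul_radius_pow hd h_scale.le] at h_connProb
  calc
    ρ * Real.log ρ * k
    _ = ρ⁻¹ * upperScale ρ k * (ρ ^ k / ρ ^ 2) := by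
      unfold upperScale
      field_simp
    _ ≤ connProb d (M.profile (M.radius (upperScale ρ k))) * (blockLower ρ k - 1) :=
      mul_le_mul h_connProb h_lower (by positivity)
        ((M.isConnFun_profile (M.radius_pos h_scale)).connProb_nonneg d)

variable [IsProbabilityMeasure P]

theorem ae_eventually_forall_notMem_isolatedIn (hd : d ≠ 0) (hρ : 1 < ρ) :
    ∀ᵐ ω ∂P, ∀ᶠ k in atTop, ∀ i < blockUpper ρ k,
      ω ∉ M.isolatedIn (M.profile (M.radius (upperScale ρ k))) (blockLower ρ k) i := by
  have h_pos : 0 < ρ := one_pos.trans hρ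
  have h_summable : Summable fun k : ℕ => ρ ^ 2 * (ρ * Real.exp (-(ρ * Real.log ρ))) ^ k := by
    refine (summable_geometric_of_lt_one (by positivity) ?_).mul_left _
    nth_rw 1 [← Real.exp_log h_pos]
    rw [← Real.exp_add, Real.exp_lt_one_iff]
    nlinarith [Real.log_pos hρ]
  suffices h_le : ∀ᶠ k in atTop, P.real {ω | ∃ i < blockUpper ρ k,
      ω ∈ M.isolatedIn (M.profile (M.radius (upperScale ρ k))) (blockLower ρ k) i} ≤
        ρ ^ 2 * (ρ * Real.exp (-(ρ * Real.log ρ))) ^ k by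
    simpa only [mem_ofPred_eq, not_exists, not_and] using
      ae_eventually_notMem_of_le_summable h_summable h_le
  filter_upwards [M.eventually_mul_log_mul_le_connProb_profile_mul hd hρ, eventually_gt_atTop 0]
    with k h_exponent hk
  have h_profile := M.isConnFun_profile (M.radius_pos (upperScale_pos hρ hk))
  calc
    P.real {ω | ∃ i < blockUpper ρ k,
      ω ∈ M.isolatedIn (M.profile (M.radius (upperScale ρ k))) (blockLower ρ k) i}
    _ ≤ blockUpper ρ k * Real.exp
          (-(connProb d (M.profile (M.radius (upperScale ρ k))) * (blockLower ρ k - 1))) :=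
      M.measureReal_exists_mem_isolatedIn_le h_profile _ _
    _ ≤ ρ ^ 2 * ρ ^ k * Real.exp (-(ρ * Real.log ρ * k)) := by
      gcongr
      exact blockUpper_le h_pos.le k
    _ = ρ ^ 2 * (ρ * Real.exp (-(ρ * Real.log ρ))) ^ k := by
      rw [mul_pow, ← Real.exp_nat_mul, mul_assoc]
      ring_nf

theorem ae_eventually_exists_mem_isolatedIn (hd : d ≠ 0) (hρ : 1 < ρ) :
    ∀ᵐ ω ∂P, ∀ᶠ k in atTop, ∃ i < blockLower ρ k,
      ω ∈ M.isolatedIn (M.profile (M.radius (lowerScale ρ k))) (blockUpper ρ k) i := by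
  have h_summable :=
    (summable_add_one_mul_pow (blockRate_pos ρ).le (blockRate_lt_one hρ)).mul_left
      (ρ ^ 2 + (2 ^ d + 24) * Real.log ρ)
  suffices h_le : ∀ᶠ k in atTop, P.real {ω | ∀ i < blockLower ρ k,
      ω ∉ M.isolatedIn (M.profile (M.radius (lowerScale ρ k))) (blockUpper ρ k) i} ≤
        (ρ ^ 2 + (2 ^ d + 24) * Real.log ρ) * ((k + 1) * blockRate ρ ^ k) by
    simpa only [mem_ofPred_eq, not_forall, not_not, exists_prop] using
      ae_eventually_notMem_of_le_summable h_summable h_le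
  filter_upwards [(tendsto_lowerScale hρ).eventually_le_const one_half_pos,
    (tendsto_lowerScale hρ).eventually_le_const (sub_pos.2 (inv_lt_one_of_one_lt₀ hρ)),
    eventually_blockLower_le_blockUpper hρ, eventually_two_le_blockUpper hρ]
    with k h_half h_inv h_blocks h_two
  have h_scale := lowerScale_pos hρ k
  have h_radius := M.radius_pos h_scale
  have h_integral : ∫ x : EuclideanSpace ℝ (Fin d), M.profile (M.radius (lowerScale ρ k)) ‖x‖ =
      lowerScale ρ k := by
    rw [M.integral_profile_norm h_radius, M.α_mul_radius_pow hd h_scale.le]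
  exact (M.measureReal_forall_notMem_isolatedIn_le_of_integral_eq (M.isConnFun_profile h_radius) hd
    (M.integrable_profile_norm h_radius) h_integral h_half
    (div_pos h_scale (pow_pos (blockRate_pos ρ) k)) (blockLower_pos (one_pos.trans hρ) k) h_blocks
    h_two).trans (second_moment_bound_le hρ d h_inv)

theorem ae_eventually_mul_critRadius_pow_div_log_mem_Icc (hd : d ≠ 0) (hρ : 1 < ρ) :
    ∀ᵐ ω ∂P, ∀ᶠ n : ℕ in atTop,
      M.α * n * critRadius M n ω ^ d / Real.log n ∈ Icc (ρ ^ 5)⁻¹ (ρ ^ 5) := by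
  have h_pos : 0 < ρ := one_pos.trans hρ
  filter_upwards [
    ae_eventually_mem_Ioo_of_hasLaw_poissonMeasure M.hasLaw_N (inv_pos.2 h_pos)
      (inv_lt_one_of_one_lt₀ hρ) hρ,
    M.ae_eventually_forall_notMem_isolatedIn hd hρ, M.ae_eventually_exists_mem_isolatedIn hd hρ]
    with ω h_count h_none h_some
  filter_upwards [h_count, eventually_gt_atTop 1, eventually_exists_pow_le_lt_pow_succ hρ
    ((h_none.and h_some).and (eventually_gt_atTop 0))]
    with n hN hn ⟨k, ⟨⟨h_none, h_some⟩, hk⟩, hkn, hnk⟩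
  obtain ⟨h_lower, h_upper⟩ := mem_Icc_blockLower_blockUpper hρ hkn hnk hN
  have h_upper_scale := upperScale_pos hρ hk
  have h_lower_scale := lowerScale_pos hρ k
  obtain ⟨h_ge, h_le⟩ := M.critRadius_mem_Icc (M.radius_pos h_upper_scale) h_lower h_upper h_some
    h_none
  have h_radius := M.radius_pos h_lower_scale
  have h_crit := h_radius.trans_le h_ge
  have hα := M.α_pos
  have h_log : 0 < Real.log n := Real.log_pos (by exact_mod_cast hn)
  rw [mul_right_comm, mul_comm, mem_Icc, le_div_iff₀ h_log, div_le_iff₀ h_log]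
  constructor
  · refine (log_le_mul_lowerScale hρ hkn hnk).trans ?_
    rw [← M.α_mul_radius_pow hd h_lower_scale.le]
    gcongr
  · refine le_trans ?_ (mul_upperScale_le_log hρ hkn hnk)
    rw [← M.α_mul_radius_pow hd h_upper_scale.le]
    gcongr

end Model

theorem critRadius_tendsto_general (hd : d ≠ 0) [IsProbabilityMeasure P] (M : Model d P) :
    ∀ᵐ ω ∂P, Tendsto
      (fun n : ℕ => M.α * n * critRadius M n ω ^ d / Real.log n) atTop (nhds 1) := by
  have h_upper : Tendsto (fun ρ : ℝ => ρ ^ 5) (nhdsWithin 1 (Ioi 1)) (nhds 1) := by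
    have h : Continuous fun ρ : ℝ => ρ ^ 5 := by fun_prop
    simpa only [one_pow] using (h.tendsto 1).mono_left nhdsWithin_le_nhds
  have h_lower : Tendsto (fun ρ : ℝ => (ρ ^ 5)⁻¹) (nhdsWithin 1 (Ioi 1)) (nhds 1) := by
    simpa only [inv_one] using h_upper.inv₀ one_ne_zero
  refine ae_tendsto_of_forall_ae_eventually_mem_Icc h_lower h_upper ?_
  filter_upwards [self_mem_nhdsWithin] with ρ hρ
  exact M.ae_eventually_mul_critRadius_pow_div_log_mem_Icc hd hρ

/-- Theorem 1(ii): a.s. `α n d_n^d / log n → 1`. -/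
theorem critRadius_tendsto (hd : 2 ≤ d) [IsProbabilityMeasure P] (M : Model d P)
    {c : ℝ} (hc : 0 < c)
    (hg : M.g =o[atTop] fun r : ℝ => Real.exp (-(c * r))) :
    ∀ᵐ ω ∂P, Tendsto
      (fun n : ℕ => M.α * n * critRadius M n ω ^ d / Real.log n) atTop (nhds 1) :=
  critRadius_tendsto_general (by omega) M

end RCM
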